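/- Let k ∈ {7, 8, 10, 11, 12, 13} and let a ≥ 10864 be a positive integer with k·a² + 4 = r² a perfect square. Set b = ka, c = a + b − 2r and s = r − a, and assume a < c < b. Consider a solution of Type 1, i.e. (x₂, y₂) = (2, ±2) and (x₀, z₀) = (2, ±2). If Q_m = P_l for some integers l ≥ 1 and m ≥ 1, then m / log(e·m) < 1.336·10¹⁴ · (log(21.3·a))². -/

import Mathlib

theorem mv_taylor (f : ℂ → ℂ) (hf : Differentiable ℂ f) (N : ℕ) :
    ∃ (c : ℕ → ℂ) (R : ℂ → ℂ), Differentiable ℂ R ∧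
      ∀ z, f z = (∑ d ∈ Finset.range N, c d * z ^ d) + z ^ N * R z := by
  induction N with
  | zero => exact ⟨fun _ => 0, f, hf, fun z => by simp⟩
  | succ N ih =>
    obtain ⟨c, R, hR, h⟩ := ih
    refine ⟨Function.update c N (R 0), dslope R 0, ?_, ?_⟩
    · have := (Complex.differentiableOn_dslope (f := R) (c := 0) (s := Set.univ) Filter.univ_mem).2
        hR.differentiableOn
      exact differentiableOn_univ.1 this
    · intro z
      have h1 : R z = R 0 + z * dslope R 0 z := by
        have := sub_smul_dslope R 0 z
        simp only [sub_zero, smul_eq_mul] at this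
        rw [this]; ring
      rw [Finset.sum_range_succ, h z]
      have h2 : ∑ d ∈ Finset.range N, Function.update c N (R 0) d * z ^ d
          = ∑ d ∈ Finset.range N, c d * z ^ d := by
        refine Finset.sum_congr rfl fun d hd => ?_
        rw [Function.update_of_ne (Finset.mem_range.1 hd).ne]
      rw [h2, Function.update_self]
      nth_rewrite 1 [h1]
      ring

theorem mv_det_diff (N : ℕ) (A : ℂ → Matrix (Fin N) (Fin N) ℂ)
    (h : ∀ i j, Differentiable ℂ fun w => A w i j) : Differentiable ℂ fun w => (A w).det := by
  simp only [Matrix.det_apply]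
  refine Differentiable.fun_sum fun σ _ => ?_
  refine Differentiable.const_smul ?_ _
  exact Differentiable.fun_finsetProd fun i _ => h _ _

theorem mv_det_bound (N : ℕ) (A : Matrix (Fin N) (Fin N) ℂ) (M : ℝ)
    (h : ∀ i j, ‖A i j‖ ≤ M) : ‖A.det‖ ≤ N.factorial * M ^ N := by
  rw [Matrix.det_apply]
  refine (norm_sum_le _ _).trans ?_
  have : ∀ σ ∈ (Finset.univ : Finset (Equiv.Perm (Fin N))),
      ‖(Equiv.Perm.sign σ) • ∏ i, A (σ i) i‖ ≤ M ^ N := by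
    intro σ _
    have h1 : ‖(Equiv.Perm.sign σ) • ∏ i, A (σ i) i‖ = ‖∏ i, A (σ i) i‖ := by
      rcases Int.units_eq_one_or (Equiv.Perm.sign σ) with h | h <;> simp [h]
    rw [h1, norm_prod]
    refine (Finset.prod_le_prod (fun _ _ => norm_nonneg _) (fun i _ => h (σ i) i)).trans ?_
    simp
  refine (Finset.sum_le_card_nsmul _ _ _ this).trans ?_
  simp [Finset.card_univ, Fintype.card_perm]

theorem mv_vanish (N : ℕ) (x : Fin N → ℂ) (hx : Function.Injective x)
    (ψ : Fin N → ℂ → ℂ) (hψ : ∀ j, Differentiable ℂ (ψ j)) (μ : Fin N → Fin N → ℂ) :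
    ∃ H : ℂ → ℂ, Differentiable ℂ H ∧ ∀ w,
      (Matrix.of fun i j => ψ j (w * x i) * Complex.exp (μ i j * w ^ N)).det
        = w ^ (∑ d : Fin N, (d : ℕ)) * H w := by
  choose c R hR hT using fun j => mv_taylor (ψ j) (hψ j) N
  have hexp : ∀ m : ℂ, ∃ r : ℂ → ℂ, Differentiable ℂ r ∧
      ∀ u, Complex.exp (m * u) = 1 + u * r u := by
    intro m
    obtain ⟨c, r, hr, h⟩ := mv_taylor (fun u => Complex.exp (m * u)) (by fun_prop) 1
    refine ⟨r, hr, fun u => ?_⟩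
    have h0 := h 0
    have h1 := h u
    simp at h0 h1
    rw [h1, ← h0]
  choose r hr hre using hexp
  let B : ℂ → Matrix (Fin N) (Fin N) ℂ := fun w => Matrix.of fun i j =>
    x i ^ N * R j (w * x i) * Complex.exp (μ i j * w ^ N) +
      (∑ d ∈ Finset.range N, c j d * (w * x i) ^ d) * r (μ i j) (w ^ N)
  let V := Matrix.vandermonde x
  have hV : IsUnit V.det := by
    rw [isUnit_iff_ne_zero]
    exact Matrix.det_vandermonde_ne_zero_iff.2 hx
  let C : Matrix (Fin N) (Fin N) ℂ := Matrix.of fun d j => c j d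
  let F : ℂ → Matrix (Fin N) (Fin N) ℂ := fun w =>
    C + Matrix.diagonal (fun d : Fin N => w ^ (N - d)) * (V⁻¹ * B w)
  refine ⟨fun w => V.det * (F w).det, ?_, ?_⟩
  · refine Differentiable.const_mul ?_ _
    refine mv_det_diff N F ?_
    intro i j
    simp only [F, Matrix.add_apply, Matrix.diagonal_mul]
    simp only [Matrix.mul_apply, B, Matrix.of_apply]
    have e1 : ∀ i : Fin N, ∀ j, Differentiable ℂ fun w => R j (w * x i) := fun i j =>
      (hR j).comp (by fun_prop)
    have e2 : ∀ m : ℂ, Differentiable ℂ fun w => r m (w ^ N) := fun m =>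
      (hr m).comp (by fun_prop)
    fun_prop
  · intro w
    have key : (Matrix.of fun i j => ψ j (w * x i) * Complex.exp (μ i j * w ^ N))
        = V * (Matrix.diagonal (fun d : Fin N => w ^ (d : ℕ)) * F w) := by
      have e1 : Matrix.diagonal (fun d : Fin N => w ^ (d : ℕ)) * F w
          = Matrix.diagonal (fun d : Fin N => w ^ (d : ℕ)) * C + w ^ N • (V⁻¹ * B w) := by
        simp only [F, mul_add, ← mul_assoc, Matrix.diagonal_mul_diagonal]
        congr 1
        have : (fun d : Fin N => w ^ (d : ℕ) * w ^ (N - (d : ℕ))) = fun _ => w ^ N := by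
          funext d
          rw [← pow_add]; congr 1; omega
        rw [this]
        ext i j
        simp [Matrix.mul_assoc, Matrix.diagonal_mul]
      rw [e1, mul_add, Matrix.mul_smul, ← mul_assoc V V⁻¹, Matrix.mul_nonsing_inv _ hV, one_mul]
      ext i j
      rw [Matrix.add_apply, Matrix.mul_apply]
      simp only [Matrix.diagonal_mul]
      simp only [Matrix.of_apply, Matrix.smul_apply, smul_eq_mul,
        V, Matrix.vandermonde_apply, C, B]
      have s1 : ∑ d : Fin N, x i ^ (d : ℕ) * (w ^ (d : ℕ) * c j d)
          = ∑ d ∈ Finset.range N, c j d * (w * x i) ^ d := by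
        rw [Finset.sum_range]
        refine Finset.sum_congr rfl fun d _ => ?_
        rw [mul_pow]; ring
      rw [s1]
      nth_rewrite 1 [hT j (w * x i)]
      rw [add_mul]
      nth_rewrite 1 [hre (μ i j) (w ^ N)]
      rw [mul_pow]
      ring
    rw [key, Matrix.det_mul, Matrix.det_mul, Matrix.det_diagonal, Finset.prod_pow_eq_pow_sum]
    ring

theorem mv_schwarz (N : ℕ) (x : Fin N → ℂ) (hx : Function.Injective x)
    (ψ : Fin N → ℂ → ℂ) (hψ : ∀ j, Differentiable ℂ (ψ j)) (μ : Fin N → Fin N → ℂ)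
    (E : ℝ) (hE : 1 < E) (M : ℝ)
    (hM : ∀ w : ℂ, ‖w‖ = E → ∀ i j, ‖ψ j (w * x i) * Complex.exp (μ i j * w ^ N)‖ ≤ M) :
    ‖(Matrix.of fun i j => ψ j (x i) * Complex.exp (μ i j)).det‖ * E ^ (N * (N - 1) / 2)
      ≤ N.factorial * M ^ N := by
  obtain ⟨H, hH, h⟩ := mv_vanish N x hx ψ hψ μ
  have hs : ∑ d : Fin N, (d : ℕ) = N * (N - 1) / 2 := by
    rw [← Finset.sum_range (fun d => d), Finset.sum_range_id]
  rw [hs] at h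
  have h1 := h 1
  simp only [one_mul, one_pow, mul_one] at h1
  rw [h1]
  have hE0 : 0 < E := by linarith
  have hP : 0 < E ^ (N * (N - 1) / 2) := by positivity
  rw [← le_div_iff₀ hP]
  refine Complex.norm_le_of_forall_mem_frontier_norm_le (U := Metric.ball 0 E) Metric.isBounded_ball
    hH.diffContOnCl ?_ (subset_closure (by simpa using hE))
  intro w hw
  rw [frontier_ball _ hE0.ne'] at hw
  have hw' : ‖w‖ = E := by simpa using hw
  rw [le_div_iff₀ hP, ← hw', ← norm_pow, mul_comm, ← norm_mul, ← h w]
  exact mv_det_bound N _ M (fun i j => hM w hw' i j)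
open Polynomial in
theorem mv_coeff_prod {ι : Type*} (s : Finset ι) (p : ι → ℝ[X]) (d : ι → ℕ)
    (h : ∀ i ∈ s, (p i).natDegree ≤ d i) :
    (∏ i ∈ s, p i).coeff (∑ i ∈ s, d i) = ∏ i ∈ s, (p i).coeff (d i) := by
  classical
  induction s using Finset.induction_on with
  | empty => simp
  | insert a s ha ih =>
    rw [Finset.prod_insert ha, Finset.sum_insert ha, Finset.prod_insert ha]
    rw [Polynomial.coeff_mul_add_eq_of_natDegree_le (h a (by simp)) ?_,
      ih fun i hi => h i (by simp [hi])]
    exact (Polynomial.natDegree_prod_le _ _).trans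
      (Finset.sum_le_sum fun i hi => h i (by simp [hi]))

open Polynomial in
theorem mv_zero {ι : Type*} [Fintype ι] (K L : ℕ) (hK : 0 < K) (θ : ℝ) (hθ : 0 < θ) (hθ1 : θ ≠ 1)
    (n : ι → ℕ) (hn : Function.Injective n) (ω : ι → ℝ) (hω : ∀ i, ω i ≠ 0)
    (hcard : K * L ≤ Fintype.card ι)
    (F : Fin L → ℝ[X]) (hF : ∀ j, (F j).natDegree < K)
    (hz : ∀ i, ∀ g < L, ∑ j : Fin L, (F j).eval ((n i : ℝ) + g) * (ω i * θ ^ g) ^ (j : ℕ) = 0) :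
    ∀ j, F j = 0 := by
  classical
  by_contra hcon
  push Not at hcon
  obtain ⟨j0, hj0⟩ := hcon
  let Λ := {j : Fin L // F j ≠ 0}
  let L' := Fintype.card Λ
  have hL' : L' ≤ L := by
    have := Fintype.card_subtype_le (fun j : Fin L => F j ≠ 0)
    rwa [Fintype.card_fin] at this
  have hL'0 : 0 < L' := Fintype.card_pos_iff.2 ⟨⟨j0, hj0⟩⟩
  let e : Fin L' ≃ Λ := (Fintype.equivFin Λ).symm
  let q : Fin L' → Fin L' → ℝ[X] := fun g a =>
    C (θ ^ ((e a).1 : ℕ)) ^ (g : ℕ) * (F (e a).1).comp (X + C ((g : ℕ) : ℝ))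
  have hqd : ∀ g a, (q g a).natDegree ≤ (F (e a).1).natDegree := by
    intro g a
    simp only [q, ← C_pow]
    refine (natDegree_C_mul_le _ _).trans ?_
    rw [natDegree_comp, natDegree_X_add_C, mul_one]
  have hqc : ∀ g a, (q g a).coeff ((F (e a).1).natDegree)
      = (F (e a).1).leadingCoeff * (θ ^ ((e a).1 : ℕ)) ^ (g : ℕ) := by
    intro g a
    simp only [q, ← C_pow, coeff_C_mul]
    rw [mul_comm]
    congr 1
    have h1 : ((F (e a).1).comp (X + C ((g : ℕ) : ℝ))).natDegree = (F (e a).1).natDegree := by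
      rw [natDegree_comp, natDegree_X_add_C, mul_one]
    rw [← h1, coeff_natDegree, leadingCoeff_comp (by rw [natDegree_X_add_C]; norm_num),
      leadingCoeff_X_add_C, one_pow, mul_one]
  let D : ℝ[X] := (Matrix.of q).det
  have hDdeg : D.natDegree < Fintype.card ι := by
    have h1 : D.natDegree ≤ L' * (K - 1) := by
      simp only [D, Matrix.det_apply]
      refine natDegree_sum_le_of_forall_le _ _ fun σ _ => ?_
      have : (Equiv.Perm.sign σ • ∏ i, Matrix.of q (σ i) i).natDegree
          ≤ (∏ i, Matrix.of q (σ i) i).natDegree := natDegree_smul_le _ _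
      refine this.trans ((natDegree_prod_le _ _).trans ?_)
      refine (Finset.sum_le_card_nsmul _ _ (K - 1) ?_).trans ?_
      · intro a _
        have := hqd (σ a) a
        have := hF (e a).1
        simp only [Matrix.of_apply]
        omega
      · simp
    have h2 : L' * (K - 1) ≤ L * (K - 1) := Nat.mul_le_mul_right _ hL'
    have h3 : L * (K - 1) < K * L := by
      rw [mul_comm K L]
      exact Nat.mul_lt_mul_of_pos_left (by omega) (by omega)
    omega
  have hDz : ∀ i, D.eval (n i : ℝ) = 0 := by
    intro i
    simp only [D]
    have h1 : (Matrix.of q).det.eval (n i : ℝ)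
        = ((Matrix.of q).map (eval (n i : ℝ))).det := by
      rw [← coe_evalRingHom, RingHom.map_det]; rfl
    rw [h1]
    refine Matrix.exists_mulVec_eq_zero_iff.1 ⟨fun a => ω i ^ ((e a).1 : ℕ), ?_, ?_⟩
    · intro h
      have := congrFun h ⟨0, hL'0⟩
      simp at this
      exact hω i this.1
    · funext g
      have h2 := hz i g (by omega)
      simp only [Matrix.mulVec, dotProduct, Matrix.map_apply, Matrix.of_apply, q, Pi.zero_apply]
      rw [← h2]
      have h3 : ∑ j : Fin L, (F j).eval ((n i : ℝ) + (g : ℕ)) * (ω i * θ ^ (g : ℕ)) ^ (j : ℕ)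
          = ∑ j : Λ, (F j.1).eval ((n i : ℝ) + (g : ℕ)) * (ω i * θ ^ (g : ℕ)) ^ (j.1 : ℕ) := by
        rw [← Finset.sum_subtype (Finset.univ.filter fun j => F j ≠ 0) (by simp)
          (fun j => (F j).eval ((n i : ℝ) + (g : ℕ)) * (ω i * θ ^ (g : ℕ)) ^ (j : ℕ))]
        symm
        refine Finset.sum_subset (Finset.subset_univ _) fun j _ hj => ?_
        have : F j = 0 := by simpa using hj
        simp [this]
      rw [h3, ← e.sum_comp]
      refine Finset.sum_congr rfl fun a _ => ?_
      simp only [eval_mul, eval_pow, eval_C, eval_comp, eval_add, eval_X]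
      rw [mul_pow, ← pow_mul, ← pow_mul, mul_comm (g : ℕ)]
      ring
  have hD0 : D = 0 := eq_zero_of_natDegree_lt_card_of_eval_eq_zero D
    (f := fun i => (n i : ℝ)) (fun i j h => hn (Nat.cast_injective h)) hDz hDdeg
  have hDc : D.coeff (∑ a, (F (e a).1).natDegree)
      = (Matrix.of fun g a : Fin L' => (F (e a).1).leadingCoeff *
          ((Matrix.vandermonde fun a : Fin L' => θ ^ ((e a).1 : ℕ)).transpose) g a).det := by
    simp only [D, Matrix.det_apply, finsetSum_coeff]
    refine Finset.sum_congr rfl fun σ _ => ?_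
    have : (Equiv.Perm.sign σ • ∏ i, Matrix.of q (σ i) i).coeff (∑ a, (F (e a).1).natDegree)
      = Equiv.Perm.sign σ • ((∏ i, Matrix.of q (σ i) i).coeff (∑ a, (F (e a).1).natDegree)) :=
        coeff_smul _ _ _
    rw [this, mv_coeff_prod _ _ _ (fun a _ => by simpa using hqd (σ a) a)]
    congr 1
    refine Finset.prod_congr rfl fun a _ => ?_
    simp only [Matrix.of_apply, Matrix.transpose_apply, Matrix.vandermonde_apply]
    exact hqc (σ a) a
  rw [hD0, coeff_zero, Matrix.det_mul_row, Matrix.det_transpose] at hDc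
  have h1 : ∏ a : Fin L', (F (e a).1).leadingCoeff ≠ 0 :=
    Finset.prod_ne_zero_iff.2 fun a _ => leadingCoeff_ne_zero.2 (e a).2
  have h2 : (Matrix.vandermonde fun a : Fin L' => θ ^ ((e a).1 : ℕ)).det ≠ 0 := by
    rw [Matrix.det_vandermonde_ne_zero_iff]
    intro a b hab
    have := pow_right_injective₀ hθ hθ1 hab
    exact e.injective (Subtype.ext (Fin.ext this))
  exact mul_ne_zero h1 h2 hDc.symm

theorem mv_minor {P : Type*} [Fintype P] (N : ℕ) (A : P → Fin N → ℝ)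
    (h : ∀ v : Fin N → ℝ, (∀ i, ∑ j, A i j * v j = 0) → v = 0) :
    ∃ f : Fin N → P, (Matrix.of fun i j => A (f i) j).det ≠ 0 := by
  classical
  let M : Matrix P (Fin N) ℝ := Matrix.of A
  have hinj : Function.Injective M.mulVecLin := by
    rw [← LinearMap.ker_eq_bot, LinearMap.ker_eq_bot']
    intro v hv
    refine h v fun i => ?_
    have := congrFun hv i
    simpa [M, Matrix.mulVec, dotProduct] using this
  have hrank : M.rank = N := by
    rw [Matrix.rank, LinearMap.finrank_range_of_inj hinj]; simp
  obtain ⟨κ, a, ha, hsp, hli⟩ := exists_linearIndependent' ℝ A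
  have : Finite κ := Finite.of_injective a ha
  have := Fintype.ofFinite κ
  have hcard : Fintype.card κ = N := by
    have h1 := finrank_span_eq_card hli
    rw [hsp] at h1
    have h2 := Matrix.rank_eq_finrank_span_row M
    rw [hrank] at h2
    exact h1.symm.trans h2.symm
  let e : Fin N ≃ κ := (Fintype.equivFinOfCardEq hcard).symm
  refine ⟨a ∘ e, ?_⟩
  have h2 : LinearIndependent ℝ (Matrix.of fun i j => A ((a ∘ e) i) j).row := by
    exact (linearIndependent_equiv e).2 hli
  rw [Matrix.linearIndependent_rows_iff_isUnit, Matrix.isUnit_iff_isUnit_det] at h2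
  exact h2.ne_zero
theorem mv_indep (w v : ℝ) (W V : ℤ) (hW : w ^ 2 = W) (hV : v ^ 2 = V) (hw : Irrational w)
    (hv : Irrational v) (hwv : Irrational (w * v)) (p0 p1 p2 p3 : ℤ)
    (h : (p0 : ℝ) + p1 * w + p2 * v + p3 * (w * v) = 0) :
    p0 = 0 ∧ p1 = 0 ∧ p2 = 0 ∧ p3 = 0 := by
  have key : ∀ (x : ℝ), Irrational x → ∀ A B : ℤ, (A : ℝ) + B * x = 0 → A = 0 ∧ B = 0 := by
    intro x hx A B hAB
    by_cases hB : B = 0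
    · subst hB
      simp at hAB
      exact ⟨by exact_mod_cast hAB, rfl⟩
    · exfalso
      apply hx
      refine ⟨-(A : ℚ) / B, ?_⟩
      push_cast
      have : (B : ℝ) ≠ 0 := by exact_mod_cast hB
      field_simp
      linarith
  have h1 : ((p0 * p2 - p1 * p3 * W : ℤ) : ℝ) + (p1 * p2 - p0 * p3 : ℤ) * w
      + ((p2 ^ 2 - p3 ^ 2 * W : ℤ) : ℝ) * v = 0 := by
    push_cast
    linear_combination (p2 - p3 * w) * h + (p1 * p3 + p3 ^ 2 * v) * hW
  set A := p0 * p2 - p1 * p3 * W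
  set B := p1 * p2 - p0 * p3
  set C := p2 ^ 2 - p3 ^ 2 * W with hC
  have h2 : ((B ^ 2 * W + C ^ 2 * V - A ^ 2 : ℤ) : ℝ) + (2 * B * C : ℤ) * (w * v) = 0 := by
    push_cast
    linear_combination (B * w + C * v - A) * h1 - B ^ 2 * hW - C ^ 2 * hV
  have h3 := (key _ hwv _ _ h2).2
  have hC0 : C = 0 := by
    have : B = 0 ∨ C = 0 := by
      rcases mul_eq_zero.1 h3 with h | h
      · left; omega
      · right; exact h
    rcases this with hB | h
    · rw [hB] at h1
      push_cast at h1
      exact (key v hv A C (by linarith)).2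
    · exact h
  have h4 : p3 = 0 := by
    by_contra hne
    have h5 : (p2 : ℝ) ^ 2 = p3 ^ 2 * w ^ 2 := by
      rw [hW]; have : p2 ^ 2 = p3 ^ 2 * W := by omega
      exact_mod_cast this
    have h6 : ((p2 : ℝ) + p3 * w) * ((p2 : ℝ) + (-p3 : ℤ) * w) = 0 := by
      push_cast; linear_combination h5
    rcases mul_eq_zero.1 h6 with h | h
    · exact hne (key w hw _ _ h).2
    · have := (key w hw _ _ h).2
      omega
  have h5 : p2 = 0 := by
    rw [h4] at hC
    rw [hC0] at hC
    have : p2 ^ 2 = 0 := by linarith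
    exact pow_eq_zero_iff (two_ne_zero) |>.1 this
  rw [h4, h5] at h
  push_cast at h
  have := key w hw p0 p1 (by linarith)
  exact ⟨this.1, this.2, h5, h4⟩

def mvRing (e g : Fin 4 → ℝ) (r s : ℤ) (he : ∀ i, e i ^ 2 = r * e i - 1)
    (hg : ∀ i, g i ^ 2 = s * g i - 1) : Subring (Fin 4 → ℝ) where
  carrier := {f | ∃ A B C D : ℤ, ∀ i, f i = A + B * e i + C * g i + D * (e i * g i)}
  mul_mem' := by
    rintro f1 f2 ⟨A, B, C, D, h1⟩ ⟨A', B', C', D', h2⟩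
    refine ⟨A * A' - B * B' - C * C' + D * D',
      A * B' + B * A' + r * B * B' - C * D' - D * C' - r * (D * D'),
      A * C' + C * A' + s * C * C' - B * D' - D * B' - s * (D * D'),
      A * D' + D * A' + B * C' + C * B' + r * (B * D' + D * B') + s * (C * D' + D * C')
        + r * s * (D * D'), fun i => ?_⟩
    simp only [Pi.mul_apply, h1, h2]
    push_cast
    linear_combination (B * B' + B * D' * g i + D * B' * g i + D * D' * g i ^ 2) * he i
      + (C * C' + C * D' * e i + D * C' * e i + D * D' * (r * e i - 1)) * hg i
  one_mem' := ⟨1, 0, 0, 0, fun i => by simp⟩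
  add_mem' := by
    rintro f1 f2 ⟨A, B, C, D, h1⟩ ⟨A', B', C', D', h2⟩
    refine ⟨A + A', B + B', C + C', D + D', fun i => ?_⟩
    simp only [Pi.add_apply, h1, h2]
    push_cast; ring
  zero_mem' := ⟨0, 0, 0, 0, fun i => by simp⟩
  neg_mem' := by
    rintro f1 ⟨A, B, C, D, h1⟩
    refine ⟨-A, -B, -C, -D, fun i => ?_⟩
    simp only [Pi.neg_apply, h1]
    push_cast; ring

theorem mv_liouville (ε α : ℝ) (r s : ℤ) (hε0 : ε ≠ 0) (hα0 : α ≠ 0)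
    (hε : ε + ε⁻¹ = r) (hα : α + α⁻¹ = s)
    (hw : Irrational (ε - ε⁻¹)) (hv : Irrational (α - α⁻¹))
    (hwv : Irrational ((ε - ε⁻¹) * (α - α⁻¹))) (f : Fin 4 → ℝ)
    (hf : ∃ A B C D : ℤ, ∀ i, f i = A + B * (![ε, ε, ε⁻¹, ε⁻¹] : Fin 4 → ℝ) i
      + C * (![α, α⁻¹, α, α⁻¹] : Fin 4 → ℝ) i
      + D * ((![ε, ε, ε⁻¹, ε⁻¹] : Fin 4 → ℝ) i * (![α, α⁻¹, α, α⁻¹] : Fin 4 → ℝ) i))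
    (hf0 : f 0 ≠ 0) : 1 ≤ |f 0| * |f 1| * |f 2| * |f 3| := by
  obtain ⟨A, B, C, D, h⟩ := hf
  have h0 := h 0
  have h1 := h 1
  have h2 := h 2
  have h3 := h 3
  simp at h0 h1 h2 h3
  obtain ⟨ε', hε'⟩ : ∃ x, x = ε⁻¹ := ⟨_, rfl⟩
  obtain ⟨α', hα'⟩ : ∃ x, x = α⁻¹ := ⟨_, rfl⟩
  have hee : ε * ε' = 1 := by rw [hε']; exact mul_inv_cancel₀ hε0
  have haa : α * α' = 1 := by rw [hα']; exact mul_inv_cancel₀ hα0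
  rw [← hε'] at hε hw hwv h2 h3
  rw [← hα'] at hα hv hwv h1 h3
  have hW : (ε - ε') ^ 2 = ((r ^ 2 - 4 : ℤ) : ℝ) := by
    push_cast; rw [← hε]; linear_combination -4 * hee
  have hV : (α - α') ^ 2 = ((s ^ 2 - 4 : ℤ) : ℝ) := by
    push_cast; rw [← hα]; linear_combination -4 * haa
  have hE2 : ε = (r + (ε - ε')) / 2 := by rw [← hε]; ring
  have hE2' : ε' = (r - (ε - ε')) / 2 := by rw [← hε]; ring
  have hA2 : α = (s + (α - α')) / 2 := by rw [← hα]; ring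
  have hA2' : α' = (s - (α - α')) / 2 := by rw [← hα]; ring
  obtain ⟨w, hwd⟩ : ∃ x, x = ε - ε' := ⟨_, rfl⟩
  obtain ⟨v, hvd⟩ : ∃ x, x = α - α' := ⟨_, rfl⟩
  rw [← hwd] at hW hE2 hE2' hw hwv
  rw [← hvd] at hV hA2 hA2' hv hwv
  have hall : A = 0 ∧ B = 0 ∧ C = 0 ∧ D = 0 → False := by
    rintro ⟨rfl, rfl, rfl, rfl⟩
    apply hf0; rw [h0]; simp
  have hz : ∀ u t : ℝ, Irrational u → Irrational t → Irrational (u * t) →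
      u ^ 2 = ((r ^ 2 - 4 : ℤ) : ℝ) → t ^ 2 = ((s ^ 2 - 4 : ℤ) : ℝ) →
      (A : ℝ) + B * ((r + u) / 2) + C * ((s + t) / 2) + D * ((r + u) / 2 * ((s + t) / 2)) ≠ 0 := by
    intro u t hu ht hut hu2 ht2 h0
    have := mv_indep u t _ _ hu2 ht2 hu ht hut (4 * A + 2 * B * r + 2 * C * s + D * r * s)
      (2 * B + D * s) (2 * C + D * r) D (by push_cast; linear_combination 4 * h0)
    obtain ⟨i0, i1, i2, i3⟩ := this
    subst i3
    have hB : B = 0 := by omega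
    have hC : C = 0 := by omega
    subst hB; subst hC
    exact hall ⟨by omega, rfl, rfl, rfl⟩
  have n1 : f 1 ≠ 0 := by
    rw [h1]
    have := hz w (-v) hw hv.neg (by rw [mul_neg]; exact hwv.neg) hW (by rw [neg_sq]; exact hV)
    rw [hE2, hA2']; simpa [sub_eq_add_neg] using this
  have n2 : f 2 ≠ 0 := by
    rw [h2]
    have := hz (-w) v hw.neg hv (by rw [neg_mul]; exact hwv.neg) (by rw [neg_sq]; exact hW) hV
    rw [hE2', hA2]; simpa [sub_eq_add_neg] using this
  have n3 : f 3 ≠ 0 := by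
    rw [h3]
    have := hz (-w) (-v) hw.neg hv.neg (by rw [neg_mul_neg]; exact hwv) (by rw [neg_sq]; exact hW)
      (by rw [neg_sq]; exact hV)
    rw [hE2', hA2']; simpa [sub_eq_add_neg] using this
  have hprod : ∃ Z : ℤ, f 0 * f 1 * f 2 * f 3 = Z := by
    -- (P+Qα)(P+Qα')
    let U : ℤ := A ^ 2 - B ^ 2 + s * (A * C - B * D) + C ^ 2 - D ^ 2
    let T : ℤ := 2 * A * B + r * B ^ 2 + s * (A * D + B * C + r * B * D) + 2 * C * D + r * D ^ 2
    have e1 : ε ^ 2 = r * ε - 1 := by rw [← hε]; linear_combination -hee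
    have e2 : ε' ^ 2 = r * ε' - 1 := by rw [← hε]; linear_combination -hee
    have q1 : f 0 * f 1 = U + T * ε := by
      rw [h0, h1]; simp only [U, T]; push_cast
      linear_combination (A + B * ε) * (C + D * ε) * hα + (C + D * ε) ^ 2 * haa
        + (B ^ 2 + s * B * D + D ^ 2) * e1
    have q2 : f 2 * f 3 = U + T * ε' := by
      rw [h2, h3]; simp only [U, T]; push_cast
      linear_combination (A + B * ε') * (C + D * ε') * hα + (C + D * ε') ^ 2 * haa
        + (B ^ 2 + s * B * D + D ^ 2) * e2
    refine ⟨U ^ 2 + r * U * T + T ^ 2, ?_⟩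
    rw [mul_assoc, q1, q2]; push_cast
    linear_combination U * T * hε + T ^ 2 * hee
  obtain ⟨Z, hZ⟩ := hprod
  rw [← abs_mul, ← abs_mul, ← abs_mul, hZ]
  have : Z ≠ 0 := by
    rintro rfl
    have : f 0 * f 1 * f 2 * f 3 ≠ 0 := by positivity
    exact this (by simpa using hZ)
  exact_mod_cast Int.one_le_abs this

theorem mv_det {ι : Type*} [Fintype ι] (K L : ℕ) (hK : 0 < K) (θ : ℝ) (hθ : 0 < θ) (hθ1 : θ ≠ 1)
    (nb : ι → ℕ) (hn : Function.Injective nb) (ω : ℕ → ℝ) (hω : ∀ i, ω i ≠ 0)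
    (hcard : K * L ≤ Fintype.card ι) (hsh : ∀ i, ∀ g < L, ω (nb i + g) = ω (nb i) * θ ^ g) :
    ∃ n : Fin (K * L) → ℕ, Function.Injective n ∧ (∀ i, ∃ b, ∃ g < L, n i = nb b + g) ∧
      (Matrix.of fun i j : Fin (K * L) => ((n i).choose (finProdFinEquiv.symm j).1 : ℝ) *
        (ω (n i)) ^ ((finProdFinEquiv.symm j).2 : ℕ)).det ≠ 0 := by
  classical
  obtain ⟨f, hf⟩ := mv_minor (P := ι × Fin L) (K * L)
    (fun p j => ((nb p.1 + p.2 : ℕ).choose (finProdFinEquiv.symm j).1 : ℝ) *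
        (ω (nb p.1 + p.2)) ^ ((finProdFinEquiv.symm j).2 : ℕ)) (by
    intro v hv
    let F : Fin L → Polynomial ℝ := fun ℓ => ∑ k : Fin K,
      Polynomial.C (v (finProdFinEquiv (k, ℓ)) / (Nat.factorial k : ℝ)) * descPochhammer ℝ k
    have hFe : ∀ ℓ, ∀ x : ℕ, (F ℓ).eval (x : ℝ) =
        ∑ k : Fin K, v (finProdFinEquiv (k, ℓ)) * (x.choose k : ℝ) := by
      intro ℓ x
      simp only [F, Polynomial.eval_finsetSum, Polynomial.eval_mul, Polynomial.eval_C,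
        descPochhammer_eval_eq_descFactorial, Nat.descFactorial_eq_factorial_mul_choose]
      refine Finset.sum_congr rfl fun k _ => ?_
      have : ((k : ℕ).factorial : ℝ) ≠ 0 := by positivity
      push_cast
      field_simp
    have hF0 := mv_zero K L hK θ hθ hθ1 nb hn (fun i => ω (nb i)) (fun i => hω _) hcard F (by
      intro ℓ
      have : (F ℓ).natDegree ≤ K - 1 := by
        refine Polynomial.natDegree_sum_le_of_forall_le _ _ fun k _ => ?_
        refine (Polynomial.natDegree_C_mul_le _ _).trans ?_
        rw [descPochhammer_natDegree]
        have := k.2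
        omega
      omega) (by
      intro i g hg
      have h1 := hv (i, ⟨g, hg⟩)
      simp only at h1
      rw [← finProdFinEquiv.sum_comp, Fintype.sum_prod_type, Finset.sum_comm] at h1
      rw [← h1]
      refine Finset.sum_congr rfl fun ℓ _ => ?_
      have := hFe ℓ (nb i + g)
      push_cast at this
      rw [this, ← hsh i g hg, Finset.sum_mul]
      refine Finset.sum_congr rfl fun k _ => ?_
      simp only [Equiv.symm_apply_apply]
      ring)
    have hz : ∀ x : ℕ, ∀ hx : x < K, ∀ ℓ, v (finProdFinEquiv (⟨x, hx⟩, ℓ)) = 0 := by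
      intro x
      induction x using Nat.strong_induction_on with
      | _ x ih =>
        intro hx ℓ
        have h1 := hFe ℓ x
        rw [hF0 ℓ, Polynomial.eval_zero, Finset.sum_eq_single (⟨x, hx⟩ : Fin K)] at h1
        · simpa using h1.symm
        · rintro ⟨b, hb⟩ _ hne
          have hne : b ≠ x := fun h => hne (by subst h; rfl)
          rcases lt_or_gt_of_ne hne with h | h
          · rw [ih b h hb ℓ]; simp
          · simp [Nat.choose_eq_zero_of_lt h]
        · simp
    funext j
    obtain ⟨⟨k, ℓ⟩, rfl⟩ := finProdFinEquiv.surjective j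
    exact hz k.1 k.2 ℓ)
  refine ⟨fun i => nb (f i).1 + (f i).2, ?_, fun i => ⟨_, _, (f i).2.2, rfl⟩, hf⟩
  intro i i' h
  by_contra hne
  simp only at h
  apply hf
  refine Matrix.det_zero_of_row_eq hne ?_
  funext j
  simp only [Matrix.of_apply, h]

theorem mv_pow_div_fact (K k : ℕ) (hk : k ≤ K) (y z : ℝ) (hy : 1 ≤ y) (hz0 : 0 ≤ z)
    (hz : z ≤ y * K) :
    z ^ k / (k.factorial : ℝ) ≤ (Real.exp 1 * y) ^ K := by
  have h1 : z ^ k ≤ y ^ k * (K : ℝ) ^ k := by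
    rw [← mul_pow]; exact pow_le_pow_left₀ hz0 hz k
  have h2 : (K : ℝ) ^ k / k.factorial ≤ Real.exp 1 ^ K := by
    rw [← Real.exp_nat_mul, mul_one]
    exact Real.pow_div_factorial_le_exp (K : ℝ) (by positivity) k
  have h3 : y ^ k ≤ y ^ K := pow_le_pow_right₀ hy hk
  calc z ^ k / (k.factorial : ℝ) ≤ y ^ k * (K : ℝ) ^ k / k.factorial := by gcongr
    _ = y ^ k * ((K : ℝ) ^ k / k.factorial) := by ring
    _ ≤ y ^ K * Real.exp 1 ^ K := by gcongr
    _ = _ := by rw [mul_pow]; ring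

theorem mv_upper (K L : ℕ) (hL : 0 < L) (n : Fin (K * L) → ℕ) (hn : Function.Injective n)
    (I : ℝ) (hI : ∀ i, (n i : ℝ) ≤ I) (lam Lam : ℝ) (hlam : |lam| ≤ Lam)
    (μ : Fin (K * L) → ℝ) (hμ : ∀ i, L * |μ i| * 16 ^ (K * L) ≤ 1)
    (y : ℝ) (hy : 1 ≤ y) (hyI : 16 * I + K ≤ y * K) :
    |(Matrix.of fun i j : Fin (K * L) => ((n i).choose (finProdFinEquiv.symm j).1 : ℝ) *
        (Real.exp (n i * lam - μ i)) ^ ((finProdFinEquiv.symm j).2 : ℕ)).det|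
      * 16 ^ ((K * L) * ((K * L) - 1) / 2) ≤
      (K * L).factorial * ((Real.exp 1 * y) ^ K * Real.exp (16 * L * Lam * I + 1)) ^ (K * L) := by
  let ψ : Fin (K * L) → ℂ → ℂ := fun j z =>
    (∏ i ∈ Finset.range (finProdFinEquiv.symm j).1, (z - (i : ℂ))) /
      (((finProdFinEquiv.symm j).1 : ℕ).factorial : ℂ) *
      Complex.exp (((finProdFinEquiv.symm j).2 : ℕ) * lam * z)
  have key := mv_schwarz (K * L) (fun i => (n i : ℂ)) (by
      intro i i' h
      apply hn
      simp only at h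
      exact_mod_cast h) ψ (by
      intro j
      simp only [ψ]
      fun_prop) (fun i j => -((((finProdFinEquiv.symm j).2 : ℕ) : ℂ) * (μ i : ℂ)))
      16 (by norm_num) ((Real.exp 1 * y) ^ K * Real.exp (16 * L * Lam * I + 1)) (by
      intro w hw i j
      have hI0 : 0 ≤ I := le_trans (by positivity) (hI i)
      have hLam0 : 0 ≤ Lam := (abs_nonneg _).trans hlam
      set k := (finProdFinEquiv.symm j).1
      set ℓ := (finProdFinEquiv.symm j).2
      have hk := k.2
      have hℓ : ((ℓ : ℕ) : ℝ) ≤ L := by exact_mod_cast ℓ.2.le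
      simp only [ψ]
      rw [mul_assoc, ← Complex.exp_add, norm_mul]
      have hwn : ‖w * (n i : ℂ)‖ ≤ 16 * I := by
        rw [norm_mul, hw, Complex.norm_natCast]
        have := hI i
        linarith
      refine mul_le_mul ?_ ?_ (norm_nonneg _) (by positivity)
      · rw [norm_div, Complex.norm_natCast, norm_prod]
        refine le_trans ?_ (mv_pow_div_fact K k hk.le y (16 * I + K) hy (by positivity) hyI)
        gcongr
        calc _ ≤ ∏ i ∈ Finset.range (k : ℕ), (16 * I + (K : ℝ)) := by
              refine Finset.prod_le_prod (fun _ _ => norm_nonneg _) fun q hq => ?_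
              refine (norm_sub_le _ _).trans ?_
              rw [Complex.norm_natCast]
              have : (q : ℝ) ≤ K := by
                have := Finset.mem_range.1 hq
                exact_mod_cast (this.trans hk).le
              exact add_le_add hwn this
          _ = _ := by simp
      · rw [Complex.norm_exp]
        refine Real.exp_le_exp.2 ((Complex.re_le_norm _).trans ((norm_add_le _ _).trans ?_))
        refine add_le_add ?_ ?_
        · rw [norm_mul, norm_mul, Complex.norm_natCast, Complex.norm_real, Real.norm_eq_abs]
          calc _ ≤ L * Lam * (16 * I) := by gcongr
            _ = _ := by ring
        · rw [norm_mul, norm_neg, norm_mul, norm_pow, hw, Complex.norm_natCast, Complex.norm_real,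
            Real.norm_eq_abs]
          refine le_trans ?_ (hμ i)
          gcongr)
  refine le_trans (le_of_eq ?_) key
  congr 1
  rw [← Real.norm_eq_abs, ← Complex.norm_real, ← Complex.ofRealHom_eq_coe, RingHom.map_det]
  congr 2
  ext i j
  simp only [RingHom.mapMatrix_apply, Matrix.map_apply, Matrix.of_apply, ψ,
    Complex.ofRealHom_eq_coe]
  push_cast
  rw [← Complex.exp_nat_mul, mul_assoc, ← Complex.exp_add]
  congr 1
  · rw [← descPochhammer_eval_eq_prod_range, descPochhammer_eval_eq_descFactorial,
      Nat.descFactorial_eq_factorial_mul_choose]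
    have : (((finProdFinEquiv.symm j).1 : ℕ).factorial : ℂ) ≠ 0 := by
      exact_mod_cast Nat.factorial_ne_zero _
    push_cast
    field_simp
  · congr 1
    ring

theorem mv_lower (ε α : ℝ) (r s : ℤ) (hε0 : ε ≠ 0) (hα0 : α ≠ 0)
    (hε : ε + ε⁻¹ = r) (hα : α + α⁻¹ = s)
    (hw : Irrational (ε - ε⁻¹)) (hv : Irrational (α - α⁻¹))
    (hwv : Irrational ((ε - ε⁻¹) * (α - α⁻¹)))
    (he : ∀ i, (![ε, ε, ε⁻¹, ε⁻¹] : Fin 4 → ℝ) i ^ 2 = r * (![ε, ε, ε⁻¹, ε⁻¹] : Fin 4 → ℝ) i - 1)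
    (hg : ∀ i, (![α, α⁻¹, α, α⁻¹] : Fin 4 → ℝ) i ^ 2 = s * (![α, α⁻¹, α, α⁻¹] : Fin 4 → ℝ) i - 1)
    (N : ℕ) (M : Fin N → Fin N → Fin 4 → ℝ)
    (hM : ∀ i j, M i j ∈ mvRing _ _ r s he hg)
    (hdet : (Matrix.of fun i j => M i j 0).det ≠ 0) (M1 M2 M3 : ℝ)
    (h1 : ∀ i j, |M i j 1| ≤ M1) (h2 : ∀ i j, |M i j 2| ≤ M2) (h3 : ∀ i j, |M i j 3| ≤ M3) :
    1 ≤ |(Matrix.of fun i j => M i j 0).det| * (N.factorial * M1 ^ N) * (N.factorial * M2 ^ N)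
      * (N.factorial * M3 ^ N) := by
  let D : Fin 4 → ℝ := (Matrix.of M).det
  have hD : ∀ t, D t = (Matrix.of fun i j => M i j t).det := by
    intro t
    have := RingHom.map_det (Pi.evalRingHom (fun _ : Fin 4 => ℝ) t) (Matrix.of M)
    exact this
  have hDm : D ∈ mvRing _ _ r s he hg := by
    simp only [D, Matrix.det_apply]
    refine Subring.sum_mem _ fun σ _ => ?_
    rcases Int.units_eq_one_or (Equiv.Perm.sign σ) with h | h
    · rw [h, one_smul]; exact Subring.prod_mem _ fun i _ => hM _ _
    · rw [h, Units.neg_smul, one_smul]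
      exact Subring.neg_mem _ (Subring.prod_mem _ fun i _ => hM _ _)
  have key := mv_liouville ε α r s hε0 hα0 hε hα hw hv hwv D hDm (by rw [hD]; exact hdet)
  have hb : ∀ t (B : ℝ), (∀ i j, |M i j t| ≤ B) → |D t| ≤ N.factorial * B ^ N := by
    intro t B hB
    rw [hD, ← Real.norm_eq_abs, ← Complex.norm_real, ← Complex.ofRealHom_eq_coe, RingHom.map_det]
    refine mv_det_bound N _ B fun i j => ?_
    simp only [RingHom.mapMatrix_apply, Matrix.map_apply, Matrix.of_apply,
      Complex.ofRealHom_eq_coe, Complex.norm_real, Real.norm_eq_abs]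
    exact hB i j
  refine key.trans ?_
  rw [hD 0]
  have b1 := hb 1 M1 h1
  have b2 := hb 2 M2 h2
  have b3 := hb 3 M3 h3
  have n1 := (abs_nonneg _).trans b1
  have n2 := (abs_nonneg _).trans b2
  gcongr

theorem mv_zpow_mem (e g : Fin 4 → ℝ) (r s : ℤ) (he : ∀ i, e i ^ 2 = r * e i - 1)
    (hg : ∀ i, g i ^ 2 = s * g i - 1) (y : ℤ) :
    (fun t => g t ^ y) ∈ mvRing e g r s he hg := by
  have hgm : g ∈ mvRing e g r s he hg := ⟨0, 0, 1, 0, fun i => by simp⟩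
  have hgm' : (fun t => (g t)⁻¹) ∈ mvRing e g r s he hg := by
    refine ⟨s, 0, -1, 0, fun i => ?_⟩
    have h := hg i
    have h0 : g i ≠ 0 := by
      intro h0; rw [h0] at h; norm_num at h
    push_cast
    field_simp
    linarith
  obtain ⟨n, rfl | rfl⟩ := y.eq_nat_or_neg
  · simp only [zpow_natCast]
    exact Subring.pow_mem _ hgm n
  · simp only [zpow_neg, zpow_natCast, ← inv_pow]
    exact Subring.pow_mem _ hgm' n

theorem mv_exp_int (x : ℝ) (z : ℤ) : Real.exp (z * x) = Real.exp x ^ z := by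
  obtain ⟨n, rfl | rfl⟩ := z.eq_nat_or_neg
  · rw [zpow_natCast, ← Real.exp_nat_mul]; norm_cast
  · rw [zpow_neg, zpow_natCast, ← Real.exp_nat_mul, ← Real.exp_neg]; push_cast; ring_nf

theorem mv_core {ι : Type*} [Fintype ι] (K L : ℕ) (hK : 0 < K) (hL : 0 < L)
    (ℒ A : ℝ) (hℒ : 0 ≤ ℒ) (r s : ℤ)
    (hε : Real.exp ℒ + (Real.exp ℒ)⁻¹ = r) (hα : Real.exp A + (Real.exp A)⁻¹ = s)
    (hw : Irrational (Real.exp ℒ - (Real.exp ℒ)⁻¹)) (hv : Irrational (Real.exp A - (Real.exp A)⁻¹))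
    (hwv : Irrational ((Real.exp ℒ - (Real.exp ℒ)⁻¹) * (Real.exp A - (Real.exp A)⁻¹)))
    (he : ∀ i, (![Real.exp ℒ, Real.exp ℒ, (Real.exp ℒ)⁻¹, (Real.exp ℒ)⁻¹] : Fin 4 → ℝ) i ^ 2
      = r * (![Real.exp ℒ, Real.exp ℒ, (Real.exp ℒ)⁻¹, (Real.exp ℒ)⁻¹] : Fin 4 → ℝ) i - 1)
    (hg : ∀ i, (![Real.exp A, (Real.exp A)⁻¹, Real.exp A, (Real.exp A)⁻¹] : Fin 4 → ℝ) i ^ 2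
      = s * (![Real.exp A, (Real.exp A)⁻¹, Real.exp A, (Real.exp A)⁻¹] : Fin 4 → ℝ) i - 1)
    (D0 : ℕ) (hD0 : 0 < D0) (hD0' : (D0 : ℝ) ≤ Real.exp (3 * ℒ))
    (Bt : Fin 4 → ℝ) (hBt : Bt ∈ mvRing _ _ r s he hg) (hBt' : ∀ t, |Bt t| ≤ Real.exp (3 * ℒ))
    (κ : ℝ) (hκ : Bt 0 = D0 * Real.exp (-κ))
    (l m p : ℕ) (q : ℤ) (lam del : ℝ) (hlam : lam = p * ℒ - q * A)
    (hdel : del = l * ℒ - m * A + κ) (hlam0 : lam ≠ 0) (Lam cχ : ℝ) (hLam : |lam| ≤ Lam)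
    (hcχ : |del| + |κ| ≤ cχ) (S : ℕ) (hμ : L * (S * |del|) * 16 ^ (K * L) ≤ 1)
    (nb : ι → ℕ) (hn : Function.Injective nb) (hcard : K * L ≤ Fintype.card ι)
    (I H : ℝ) (hJ : ∀ i, ∀ g < L, (nb i + g) * p / l = nb i * p / l)
    (hS : ∀ i, nb i * p / l ≤ S) (hI : ∀ i, ∀ g < L, ((nb i + g : ℕ) : ℝ) ≤ I)
    (hH : ∀ i, ∀ g < L, (((nb i + g) * p % l : ℕ) : ℝ) ≤ H)
    (y : ℝ) (hy : 1 ≤ y) (hyI : 16 * I + K ≤ y * K) :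
    ((K * L : ℕ) - 1 : ℝ) / 2 * Real.log 16 ≤ 4 * Real.log (K * L : ℕ) + 4 * K * (1 + Real.log y)
      + L * (2 * H * ℒ + 3 * (I * Lam + S * cχ) + 12 * ℒ * S + 16 * Lam * I) + 1 := by
  classical
  let ω : ℕ → ℝ := fun n => Real.exp (n * lam - ((n * p / l : ℕ) : ℝ) * del)
  obtain ⟨n, hninj, hnb, hdet⟩ := mv_det K L hK (Real.exp lam) (Real.exp_pos _)
    (by simpa using hlam0) nb hn ω (fun i => (Real.exp_pos _).ne') hcard (by
      intro i g hgL
      simp only [ω]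
      rw [hJ i g hgL, ← Real.exp_nat_mul, ← Real.exp_add]
      congr 1
      push_cast
      ring)
  have hnI : ∀ i, (n i : ℝ) ≤ I := by
    intro i; obtain ⟨b, g, hgL, h⟩ := hnb i; rw [h]; exact hI b g hgL
  have hnS : ∀ i, n i * p / l ≤ S := by
    intro i; obtain ⟨b, g, hgL, h⟩ := hnb i; rw [h, hJ b g hgL]; exact hS b
  have hnH : ∀ i, ((n i * p % l : ℕ) : ℝ) ≤ H := by
    intro i; obtain ⟨b, g, hgL, h⟩ := hnb i; rw [h]; exact hH b g hgL
  have hKL : 0 < K * L := Nat.mul_pos hK hL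
  have hI0 : 0 ≤ I := le_trans (by positivity) (hnI ⟨0, hKL⟩)
  have hH0 : 0 ≤ H := le_trans (by positivity) (hnH ⟨0, hKL⟩)
  have hLam0 : 0 ≤ Lam := (abs_nonneg _).trans hLam
  have hcχ0 : 0 ≤ cχ := le_trans (by positivity) hcχ
  have hup := mv_upper K L hL n hninj I hnI lam Lam hLam
    (fun i => ((n i * p / l : ℕ) : ℝ) * del) (by
      intro i
      refine le_trans ?_ hμ
      have : ((n i * p / l : ℕ) : ℝ) ≤ S := by exact_mod_cast hnS i
      rw [abs_mul, Nat.abs_cast]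
      gcongr) y hy hyI
  set Δ := (Matrix.of fun i j : Fin (K * L) => ((n i).choose (finProdFinEquiv.symm j).1 : ℝ) *
        (ω (n i)) ^ ((finProdFinEquiv.symm j).2 : ℕ)).det with hΔ
  change |Δ| * _ ≤ _ at hup
  -- the tuples
  let e : Fin 4 → ℝ := ![Real.exp ℒ, Real.exp ℒ, (Real.exp ℒ)⁻¹, (Real.exp ℒ)⁻¹]
  let g : Fin 4 → ℝ := ![Real.exp A, (Real.exp A)⁻¹, Real.exp A, (Real.exp A)⁻¹]
  let X : ℕ → ℕ := fun n => n * p % l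
  let J : ℕ → ℕ := fun n => n * p / l
  let Y : ℕ → ℤ := fun n => n * q - J n * m
  let u : ℕ → Fin 4 → ℝ := fun n t => e t ^ (X n) * g t ^ (-(Y n))
  let M : Fin (K * L) → Fin (K * L) → Fin 4 → ℝ := fun i j t =>
    ((n i).choose (finProdFinEquiv.symm j).1 : ℝ) * u (n i) t ^ ((finProdFinEquiv.symm j).2 : ℕ)
      * Bt t ^ (J (n i) * ((finProdFinEquiv.symm j).2 : ℕ))
      * (D0 : ℝ) ^ (J (n i) * (L - ((finProdFinEquiv.symm j).2 : ℕ)))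
  have hmem : ∀ i j, M i j ∈ mvRing _ _ r s he hg := by
    intro i j
    have hem : e ∈ mvRing _ _ r s he hg := ⟨0, 1, 0, 0, fun i => by simp [e]⟩
    have hum : u (n i) ∈ mvRing _ _ r s he hg :=
      Subring.mul_mem _ (Subring.pow_mem _ hem (X (n i)))
        (mv_zpow_mem _ _ r s he hg (-(Y (n i))))
    have hc : ∀ c : ℕ, (fun _ => (c : ℝ)) ∈ mvRing _ _ r s he hg := fun c =>
      ⟨c, 0, 0, 0, fun i => by simp⟩
    exact Subring.mul_mem _ (Subring.mul_mem _ (Subring.mul_mem _ (hc _)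
      (Subring.pow_mem _ hum _)) (Subring.pow_mem _ hBt _)) (Subring.pow_mem _ (hc D0) _)
  have hxJ : ∀ n : ℕ, (X n : ℝ) = n * p - J n * l := by
    intro n
    have : l * (n * p / l) + n * p % l = n * p := Nat.div_add_mod _ _
    have h2 : (l : ℝ) * J n + X n = n * p := by exact_mod_cast this
    linarith
  have hvv : ∀ n : ℕ, (X n : ℝ) * ℒ - Y n * A = n * lam - J n * del + J n * κ := by
    intro n
    simp only [Y]
    push_cast
    rw [hxJ, hlam, hdel]
    ring
  have hu0 : ∀ n : ℕ, u n 0 = Real.exp (X n * ℒ - Y n * A) := by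
    intro n
    simp only [u, e, g]
    simp only [Matrix.cons_val_zero]
    rw [← Real.exp_nat_mul, ← mv_exp_int, ← Real.exp_add]
    congr 1; push_cast; ring
  have hu1 : ∀ n : ℕ, u n 1 = Real.exp (2 * X n * ℒ - (X n * ℒ - Y n * A)) := by
    intro n
    simp only [u, e, g]
    simp only [Matrix.cons_val_one, Matrix.cons_val_zero, ← Real.exp_neg]
    rw [← Real.exp_nat_mul, ← mv_exp_int, ← Real.exp_add]
    congr 1; push_cast; ring
  have hu2 : ∀ n : ℕ, u n 2 = Real.exp (-(2 * X n * ℒ) + (X n * ℒ - Y n * A)) := by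
    intro n
    simp only [u, e, g]
    simp only [Matrix.cons_val, ← Real.exp_neg]
    rw [← Real.exp_nat_mul, ← mv_exp_int, ← Real.exp_add]
    congr 1; push_cast; ring
  have hu3 : ∀ n : ℕ, u n 3 = Real.exp (-(X n * ℒ - Y n * A)) := by
    intro n
    simp only [u, e, g]
    simp only [Matrix.cons_val, ← Real.exp_neg]
    rw [← Real.exp_nat_mul, ← mv_exp_int, ← Real.exp_add]
    congr 1; push_cast; ring
  have hD0R : (0 : ℝ) < D0 := by exact_mod_cast hD0
  have hM0 : ∀ i j, M i j 0 = (D0 : ℝ) ^ (J (n i) * L) *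
      (((n i).choose (finProdFinEquiv.symm j).1 : ℝ) *
        (ω (n i)) ^ ((finProdFinEquiv.symm j).2 : ℕ)) := by
    intro i j
    simp only [M]
    have hℓ := (finProdFinEquiv.symm j).2.2
    set ℓ : ℕ := ((finProdFinEquiv.symm j).2 : ℕ)
    have h1 : u (n i) 0 = ω (n i) * Real.exp κ ^ (J (n i)) := by
      rw [hu0, hvv, ← Real.exp_nat_mul, ← Real.exp_add]
    have h2 : (D0 : ℝ) ^ (J (n i) * L) = (D0 : ℝ) ^ (J (n i) * ℓ) * (D0 : ℝ) ^ (J (n i) * (L - ℓ)) := by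
      rw [← pow_add, ← mul_add]; congr 2; omega
    have h3 : Real.exp κ ^ (J (n i) * ℓ) * Real.exp (-κ) ^ (J (n i) * ℓ) = 1 := by
      rw [← mul_pow, ← Real.exp_add]; simp
    rw [h1, hκ, h2, mul_pow, mul_pow, ← pow_mul]
    linear_combination ((n i).choose (finProdFinEquiv.symm j).1 : ℝ) * ω (n i) ^ ℓ *
      (D0 : ℝ) ^ (J (n i) * ℓ) * (D0 : ℝ) ^ (J (n i) * (L - ℓ)) * h3
  have hdM : (Matrix.of fun i j => M i j 0).det = (∏ i, (D0 : ℝ) ^ (J (n i) * L)) * Δ := by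
    rw [hΔ, ← Matrix.det_mul_column]
    congr 1
    ext i j
    simp only [Matrix.of_apply, hM0]
  let T := I * Lam + S * cχ
  have hT0 : 0 ≤ T := by positivity
  have hvT : ∀ i, |(X (n i) : ℝ) * ℒ - Y (n i) * A| ≤ T := by
    intro i
    rw [hvv]
    have hJS : ((J (n i) : ℕ) : ℝ) ≤ S := by exact_mod_cast hnS i
    calc |(n i : ℝ) * lam - J (n i) * del + J (n i) * κ|
        ≤ |(n i : ℝ) * lam| + |(J (n i) : ℝ) * del| + |(J (n i) : ℝ) * κ| :=
          (abs_add_le _ _).trans (add_le_add (abs_sub _ _) le_rfl)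
      _ = n i * |lam| + J (n i) * (|del| + |κ|) := by
          rw [abs_mul, abs_mul, abs_mul, Nat.abs_cast, Nat.abs_cast]; ring
      _ ≤ I * Lam + S * cχ := by
          have := hnI i
          gcongr
  have hbd : ∀ t (Wt : ℝ), 0 ≤ Wt → (∀ i, 0 ≤ u (n i) t ∧ u (n i) t ≤ Real.exp Wt) → ∀ i j,
      |M i j t| ≤ (Real.exp 1 * y) ^ K * Real.exp (L * Wt) * Real.exp (3 * ℒ * S * L) := by
    intro t Wt hWt hu i j
    simp only [M]
    have hℓ := (finProdFinEquiv.symm j).2.2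
    have hk := (finProdFinEquiv.symm j).1.2
    set ℓ : ℕ := ((finProdFinEquiv.symm j).2 : ℕ)
    set k : ℕ := ((finProdFinEquiv.symm j).1 : ℕ)
    have hJS : ((J (n i) : ℕ) : ℝ) ≤ S := by exact_mod_cast hnS i
    obtain ⟨hu0', hu1'⟩ := hu i
    rw [abs_mul, abs_mul, abs_mul, abs_pow, abs_pow, abs_pow, Nat.abs_cast, Nat.abs_cast,
      abs_of_nonneg hu0']
    have c1 : ((n i).choose k : ℝ) ≤ (Real.exp 1 * y) ^ K := by
      refine (Nat.choose_le_pow_div k (n i)).trans ?_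
      refine mv_pow_div_fact K k hk.le y (n i) hy (by positivity) ?_
      have := hnI i
      have : (0 : ℝ) ≤ K := by positivity
      linarith
    have c2 : u (n i) t ^ ℓ ≤ Real.exp (L * Wt) := by
      calc u (n i) t ^ ℓ ≤ Real.exp Wt ^ ℓ := by gcongr
        _ ≤ Real.exp Wt ^ L := pow_le_pow_right₀ (Real.one_le_exp hWt) hℓ.le
        _ = _ := by rw [← Real.exp_nat_mul]
    have c3 : |Bt t| ^ (J (n i) * ℓ) * (D0 : ℝ) ^ (J (n i) * (L - ℓ)) ≤ Real.exp (3 * ℒ * S * L) := by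
      calc |Bt t| ^ (J (n i) * ℓ) * (D0 : ℝ) ^ (J (n i) * (L - ℓ))
          ≤ Real.exp (3 * ℒ) ^ (J (n i) * ℓ) * Real.exp (3 * ℒ) ^ (J (n i) * (L - ℓ)) := by
            have := hBt' t
            gcongr
        _ = Real.exp (3 * ℒ) ^ (J (n i) * L) := by
            rw [← pow_add, ← mul_add]; congr 2; omega
        _ = Real.exp ((J (n i) * L : ℕ) * (3 * ℒ)) := by rw [← Real.exp_nat_mul]
        _ ≤ _ := by
            refine Real.exp_le_exp.2 ?_
            push_cast
            calc (J (n i) : ℝ) * L * (3 * ℒ) ≤ S * L * (3 * ℒ) := by gcongr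
              _ = _ := by ring
    rw [mul_assoc]
    gcongr
  have hb1 := hbd 1 (2 * H * ℒ + T) (by positivity) (by
    intro i
    rw [hu1]
    refine ⟨(Real.exp_pos _).le, Real.exp_le_exp.2 ?_⟩
    have h1 := neg_le_of_abs_le (hvT i)
    have h2 : 2 * (X (n i) : ℝ) * ℒ ≤ 2 * H * ℒ := by
      have : (X (n i) : ℝ) ≤ H := hnH i
      gcongr
    linarith)
  have hb2 := hbd 2 T hT0 (by
    intro i
    rw [hu2]
    refine ⟨(Real.exp_pos _).le, Real.exp_le_exp.2 ?_⟩
    have h1 := le_of_abs_le (hvT i)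
    have h2 : 0 ≤ 2 * (X (n i) : ℝ) * ℒ := by positivity
    linarith)
  have hb3 := hbd 3 T hT0 (by
    intro i
    rw [hu3]
    refine ⟨(Real.exp_pos _).le, Real.exp_le_exp.2 ?_⟩
    have h1 := neg_le_of_abs_le (hvT i)
    linarith)
  have hlow := mv_lower _ _ r s (Real.exp_pos _).ne' (Real.exp_pos _).ne' hε hα hw hv hwv he hg (K * L) M
    hmem (by
      rw [hdM]
      refine mul_ne_zero (Finset.prod_ne_zero_iff.2 fun i _ => by positivity) hdet) _ _ _ hb1 hb2 hb3
  rw [hdM, abs_mul] at hlow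
  have hprod : |∏ i, (D0 : ℝ) ^ (J (n i) * L)| ≤ Real.exp (3 * ℒ * S * L) ^ (K * L) := by
    rw [Finset.abs_prod]
    calc _ ≤ ∏ i : Fin (K * L), Real.exp (3 * ℒ * S * L) := by
          refine Finset.prod_le_prod (fun _ _ => abs_nonneg _) fun i _ => ?_
          rw [abs_of_pos (by positivity)]
          have hJS : ((J (n i) : ℕ) : ℝ) ≤ S := by exact_mod_cast hnS i
          calc (D0 : ℝ) ^ (J (n i) * L) ≤ Real.exp (3 * ℒ) ^ (J (n i) * L) := by gcongr
            _ = Real.exp ((J (n i) * L : ℕ) * (3 * ℒ)) := by rw [← Real.exp_nat_mul]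
            _ ≤ _ := by
              refine Real.exp_le_exp.2 ?_
              push_cast
              calc (J (n i) : ℝ) * L * (3 * ℒ) ≤ S * L * (3 * ℒ) := by gcongr
                _ = _ := by ring
      _ = _ := by simp
  -- combine
  have hfac : (((K * L).factorial : ℕ) : ℝ) ≤ ((K * L : ℕ) : ℝ) ^ (K * L) := by exact_mod_cast Nat.factorial_le_pow (K * L)
  set E1 := (Real.exp 1 * y) ^ K with hE1
  have hE1p : 0 < E1 := by positivity
  set Z : ℝ := ((K * L : ℕ) : ℝ) ^ 4 * E1 ^ 4 * Real.exp (L * (2 * H * ℒ + T)) * Real.exp (L * T) ^ 2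
    * Real.exp (3 * ℒ * S * L) ^ 4 * Real.exp (16 * L * Lam * I + 1) with hZ
  have hfin : (16 : ℝ) ^ ((K * L) * ((K * L) - 1) / 2) ≤ Z ^ (K * L) := by
    set Q1 := ((K * L).factorial * (E1 * Real.exp (L * (2 * H * ℒ + T)) * Real.exp (3 * ℒ * S * L)) ^ (K * L) : ℝ)
    set Q2 := ((K * L).factorial * (E1 * Real.exp (L * T) * Real.exp (3 * ℒ * S * L)) ^ (K * L) : ℝ)
    have hNN : (0 : ℝ) < ((K * L : ℕ) : ℝ) := by exact_mod_cast hKL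
    have a1 : Q1 ≤ (((K * L : ℕ) : ℝ) ^ (K * L) * (E1 * Real.exp (L * (2 * H * ℒ + T)) * Real.exp (3 * ℒ * S * L)) ^ (K * L)) := by
      simp only [Q1]; gcongr
    have a2 : Q2 ≤ (((K * L : ℕ) : ℝ) ^ (K * L) * (E1 * Real.exp (L * T) * Real.exp (3 * ℒ * S * L)) ^ (K * L)) := by
      simp only [Q2]; gcongr
    have q1 : 0 ≤ Q1 := by positivity
    have q2 : 0 ≤ Q2 := by positivity
    have hP : (0 : ℝ) ≤ 16 ^ ((K * L) * ((K * L) - 1) / 2) := by positivity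
    calc (16 : ℝ) ^ ((K * L) * ((K * L) - 1) / 2) = 1 * 16 ^ ((K * L) * ((K * L) - 1) / 2) := by ring
      _ ≤ (|∏ i, (D0 : ℝ) ^ (J (n i) * L)| * |Δ| * Q1 * Q2 * Q2) * 16 ^ ((K * L) * ((K * L) - 1) / 2) := by
          gcongr
      _ = |∏ i, (D0 : ℝ) ^ (J (n i) * L)| * Q1 * Q2 * Q2 * (|Δ| * 16 ^ ((K * L) * ((K * L) - 1) / 2)) := by ring
      _ ≤ Real.exp (3 * ℒ * S * L) ^ (K * L) *
          (((K * L : ℕ) : ℝ) ^ (K * L) * (E1 * Real.exp (L * (2 * H * ℒ + T)) * Real.exp (3 * ℒ * S * L)) ^ (K * L)) *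
          (((K * L : ℕ) : ℝ) ^ (K * L) * (E1 * Real.exp (L * T) * Real.exp (3 * ℒ * S * L)) ^ (K * L)) *
          (((K * L : ℕ) : ℝ) ^ (K * L) * (E1 * Real.exp (L * T) * Real.exp (3 * ℒ * S * L)) ^ (K * L)) *
          (((K * L : ℕ) : ℝ) ^ (K * L) * (E1 * Real.exp (16 * L * Lam * I + 1)) ^ (K * L)) := by
          have a3 : |Δ| * 16 ^ ((K * L) * ((K * L) - 1) / 2) ≤
            (((K * L : ℕ) : ℝ) ^ (K * L) * (E1 * Real.exp (16 * L * Lam * I + 1)) ^ (K * L)) := by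
            refine hup.trans ?_
            gcongr
          gcongr
      _ = Z ^ (K * L) := by
          rw [hZ]
          simp only [← mul_pow]
          congr 1
          ring
  have hNpos : (0 : ℝ) < ((K * L : ℕ) : ℝ) := by exact_mod_cast hKL
  have hlog := Real.log_le_log (by positivity) hfin
  rw [Real.log_pow, Real.log_pow] at hlog
  have hdiv : (((K * L) * ((K * L) - 1) / 2 : ℕ) : ℝ) = ((K * L : ℕ) : ℝ) * (((K * L : ℕ) : ℝ) - 1) / 2 := by
    rw [Nat.cast_div (Nat.even_mul_pred_self (K * L)).two_dvd (by norm_num)]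
    rw [Nat.cast_mul, Nat.cast_sub hKL]
    norm_num
  rw [hdiv] at hlog
  have hlogZ : Real.log Z = 4 * Real.log ((K * L : ℕ) : ℝ) + 4 * K * (1 + Real.log y) + L * (2 * H * ℒ + T)
      + 2 * (L * T) + 4 * (3 * ℒ * S * L) + (16 * L * Lam * I + 1) := by
    rw [hZ, Real.log_mul (by positivity) (by positivity), Real.log_mul (by positivity) (by positivity),
      Real.log_mul (by positivity) (by positivity), Real.log_mul (by positivity) (by positivity),
      Real.log_mul (by positivity) (by positivity), hE1]
    simp only [Real.log_pow, Real.log_exp]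
    rw [Real.log_mul (by positivity) (by positivity), Real.log_exp]
    push_cast
    ring
  have hfin2 : (((K * L : ℕ) : ℝ) - 1) / 2 * Real.log 16 ≤ Real.log Z := by
    have : ((K * L : ℕ) : ℝ) * ((((K * L : ℕ) : ℝ) - 1) / 2 * Real.log 16) ≤ ((K * L : ℕ) : ℝ) * Real.log Z := by linarith
    exact le_of_mul_le_mul_left this hNpos
  rw [hlogZ] at hfin2
  simp only [T] at hfin2
  linarith

set_option maxHeartbeats 2000000 in
theorem mv_final 
    (ℒ A : ℝ) (hℒ : 10 ≤ ℒ) (hA : 0 < A) (hA1 : A ≤ ℒ) (r s : ℤ)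
    (hε : Real.exp ℒ + (Real.exp ℒ)⁻¹ = r) (hα : Real.exp A + (Real.exp A)⁻¹ = s)
    (hw : Irrational (Real.exp ℒ - (Real.exp ℒ)⁻¹)) (hv : Irrational (Real.exp A - (Real.exp A)⁻¹))
    (hwv : Irrational ((Real.exp ℒ - (Real.exp ℒ)⁻¹) * (Real.exp A - (Real.exp A)⁻¹)))
    (he : ∀ i, (![Real.exp ℒ, Real.exp ℒ, (Real.exp ℒ)⁻¹, (Real.exp ℒ)⁻¹] : Fin 4 → ℝ) i ^ 2
      = r * (![Real.exp ℒ, Real.exp ℒ, (Real.exp ℒ)⁻¹, (Real.exp ℒ)⁻¹] : Fin 4 → ℝ) i - 1)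
    (hg : ∀ i, (![Real.exp A, (Real.exp A)⁻¹, Real.exp A, (Real.exp A)⁻¹] : Fin 4 → ℝ) i ^ 2
      = s * (![Real.exp A, (Real.exp A)⁻¹, Real.exp A, (Real.exp A)⁻¹] : Fin 4 → ℝ) i - 1)
    (D0 : ℕ) (hD0 : 0 < D0) (hD0' : (D0 : ℝ) ≤ Real.exp (3 * ℒ))
    (Bt : Fin 4 → ℝ) (hBt : Bt ∈ mvRing _ _ r s he hg) (hBt' : ∀ t, |Bt t| ≤ Real.exp (3 * ℒ))
    (κ : ℝ) (hκ : Bt 0 = D0 * Real.exp (-κ)) (hκ' : |κ| ≤ ℒ)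
    (l m : ℕ) (del : ℝ)
    (hdel : del = l * ℒ - m * A + κ) (hdel' : |del| ≤ Real.exp (-(2 * l - 1) * ℒ))
    (hne : ∀ p : ℕ, ∀ q : ℤ, 0 < p → (p : ℝ) * ℒ - q * A ≠ 0)
    (G : ℕ) (hG : ℒ ≤ G) (hG' : (G : ℝ) ≤ 1.1 * ℒ) (hl : 2 * 10 ^ 15 * G ^ 2 ≤ l) : False := by
  have hG10R : (10 : ℝ) ≤ G := by linarith
  have hG10 : 10 ≤ G := by exact_mod_cast hG10R
  have hX : 0 < 2 * 10 ^ 7 * G := by positivity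
  obtain ⟨p, hp0, hpX, hpq⟩ := Real.exists_nat_abs_mul_sub_round_le (ℒ / A) hX
  obtain ⟨q, hq⟩ : ∃ q : ℤ, q = round ((p : ℝ) * (ℒ / A)) := ⟨_, rfl⟩
  rw [← hq] at hpq
  have hpR : (1 : ℝ) ≤ p := by exact_mod_cast hp0
  have hpXR : (p : ℝ) ≤ 2 * 10 ^ 7 * G := by exact_mod_cast hpX
  have hlR : 2 * 10 ^ 15 * (G : ℝ) ^ 2 ≤ l := by exact_mod_cast hl
  have hl1 : (10 : ℝ) ^ 17 ≤ l := by nlinarith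
  have hl0 : 0 < l := by
    have : (0 : ℝ) < l := by linarith
    exact_mod_cast this
  -- p * 10^8 * G ≤ l
  have hpG : (p : ℝ) * (10 ^ 8 * G) ≤ l := by
    have : (p : ℝ) * (10 ^ 8 * G) ≤ 2 * 10 ^ 7 * G * (10 ^ 8 * G) := by gcongr
    nlinarith
  have hpG9 : (p : ℝ) * 10 ^ 9 ≤ l := by nlinarith
  have hpGn : p * 10 ^ 9 ≤ l := by exact_mod_cast hpG9
  obtain ⟨R, hR⟩ : ∃ R, R = l / (1000 * p) := ⟨_, rfl⟩
  have hR1 : 1000 * p * R ≤ l := by rw [hR]; exact Nat.mul_div_le _ _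
  have hR2 : l < 1000 * p * R + 1000 * p := by
    rw [hR]
    have := Nat.lt_mul_div_succ l (show 0 < 1000 * p by positivity)
    linarith
  have hR1R : 1000 * ((p : ℝ) * R) ≤ l := by rw [← mul_assoc]; exact_mod_cast hR1
  have hR2R : (l : ℝ) ≤ 1000 * ((p : ℝ) * R) + 1000 * p := by
    rw [← mul_assoc]; exact_mod_cast hR2.le
  have hR2' : 0.999 * (l : ℝ) ≤ 1000 * ((p : ℝ) * R) := by linarith
  have hRpos : 0 < R := by
    rcases Nat.eq_zero_or_pos R with h | h
    · exfalso; rw [h] at hR2'; push_cast at hR2'; linarith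
    · exact h
  have hpR99 : p * (R + 100) ≤ l := by
    have : (p : ℝ) * (R + 100) ≤ l := by linarith
    exact_mod_cast this
  let nb : Fin (500 * G * p) × Fin R → ℕ := fun b => (b.1 * l + (p - 1)) / p + b.2
  have hnb : ∀ b, ∀ g < 100, b.1 * l ≤ (nb b + g) * p ∧ (nb b + g) * p ≤ b.1 * l + p * (R + 99) ∧
      (nb b + g) * p < b.1 * l + l := by
    rintro ⟨⟨j, hj⟩, ⟨i, hi⟩⟩ g hg
    simp only [nb]
    obtain ⟨c, hc⟩ : ∃ c, c = (j * l + (p - 1)) / p := ⟨_, rfl⟩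
    rw [← hc]
    have h1 : p * c ≤ j * l + (p - 1) := by rw [hc]; exact Nat.mul_div_le _ _
    have h2 : j * l + (p - 1) < p * c + p := by
      rw [hc]
      have := Nat.lt_mul_div_succ (j * l + (p - 1)) hp0
      linarith
    have h3 : (c + i + g) * p = p * c + p * (i + g) := by ring
    have h4 : p * (i + g) ≤ p * (R + 98) := Nat.mul_le_mul_left _ (by omega)
    have h5 : p * (R + 98) + p = p * (R + 99) := by ring
    have h6 : p * (R + 98) + 2 * p = p * (R + 100) := by ring
    rw [h3]
    refine ⟨?_, ?_, ?_⟩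
    · have : 0 ≤ p * (i + g) := Nat.zero_le _
      omega
    · omega
    · omega
  have hdiv : ∀ b, ∀ g < 100, (nb b + g) * p / l = b.1 := by
    intro b g hg
    obtain ⟨h1, _, h3⟩ := hnb b g hg
    rw [Nat.div_eq_iff hl0]
    constructor
    · linarith
    · omega
  have hdiv0 : ∀ b, nb b * p / l = b.1 := fun b => by simpa using hdiv b 0 (by norm_num)
  have hinj : Function.Injective nb := by
    intro b b' h
    have h1 : (b.1 : ℕ) = b'.1 := by rw [← hdiv0 b, ← hdiv0 b', h]
    have h2 : (b.2 : ℕ) = b'.2 := by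
      simp only [nb] at h
      rw [h1] at h
      omega
    exact Prod.ext (Fin.ext h1) (Fin.ext h2)
  have hlog2 := Real.log_two_lt_d9
  have hlog2' := Real.log_two_gt_d9
  have hlog16 : Real.log 16 = 4 * Real.log 2 := by
    rw [show (16 : ℝ) = 2 ^ 4 by norm_num, Real.log_pow]; norm_num
  have hNle : (((5 * G * p * R) * 100 : ℕ) : ℝ) ≤ 0.5 * (l * G) := by
    push_cast
    have : (G : ℝ) * (1000 * ((p : ℝ) * R)) ≤ G * l := by gcongr
    linarith
  have hNge : 0.4995 * (l * G) ≤ (((5 * G * p * R) * 100 : ℕ) : ℝ) := by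
    push_cast
    have : (G : ℝ) * (0.999 * (l : ℝ)) ≤ G * (1000 * ((p : ℝ) * R)) := by gcongr
    linarith
  have hlG : (10 : ℝ) ^ 18 ≤ l * G := by nlinarith
  have hl00 : (0 : ℝ) < l := by linarith
  obtain ⟨Lam, hLam⟩ : ∃ x : ℝ, x = ℒ / (2 * 10 ^ 7 * G) := ⟨_, rfl⟩
  have hcore := mv_core (5 * G * p * R) 100 (by positivity) (by norm_num) ℒ A (by linarith) r s hε hα
    hw hv hwv he hg D0 hD0 hD0' Bt hBt hBt' κ hκ l m p q _ del rfl hdel (hne p q hp0)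
    Lam (2 * ℒ) (by
      rw [hLam]
      have h1 : (p : ℝ) * ℒ - q * A = A * ((p : ℝ) * (ℒ / A) - q) := by field_simp
      rw [h1, abs_mul, abs_of_pos hA]
      calc A * |(p : ℝ) * (ℒ / A) - q| ≤ ℒ * (1 / (2 * 10 ^ 7 * G)) := by
            refine mul_le_mul hA1 (hpq.trans ?_) (abs_nonneg _) (by linarith)
            push_cast
            refine one_div_le_one_div_of_le (by positivity) (by linarith)
        _ = _ := by ring) (by
      have : |del| ≤ 1 := by
        refine hdel'.trans ?_
        rw [Real.exp_le_one_iff]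
        have : 0 ≤ (2 * (l : ℝ) - 1) * ℒ := by
          apply mul_nonneg <;> linarith
        linarith
      linarith) (500 * G * p) (by
      have h16 : (16 : ℝ) ^ ((5 * G * p * R) * 100) ≤ Real.exp (1.6 * (l * ℒ)) := by
        rw [← Real.exp_log (show (0 : ℝ) < 16 by norm_num), ← Real.exp_nat_mul]
        refine Real.exp_le_exp.2 ?_
        have : (l : ℝ) * G ≤ l * (1.1 * ℒ) := by gcongr
        have h3 : (0 : ℝ) ≤ l * ℒ := by positivity
        calc _ ≤ 0.5 * (l * G) * Real.log 16 := by
              gcongr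
          _ ≤ 0.5 * (l * (1.1 * ℒ)) * (4 * 0.6931471808) := by
              rw [hlog16]; gcongr
          _ ≤ _ := by linarith
      have hS : ((100 : ℕ) : ℝ) * ((500 * G * p : ℕ) : ℝ) ≤ Real.exp (0.1 * (l * ℒ)) := by
        have : (l : ℝ) ≤ Real.exp l := by
          have := Real.add_one_le_exp (l : ℝ); linarith
        have h2 : Real.exp l ≤ Real.exp (0.1 * (l * ℒ)) := by
          refine Real.exp_le_exp.2 ?_
          have : (l : ℝ) * 10 ≤ l * ℒ := by gcongr
          linarith
        push_cast
        linarith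
      calc ((100 : ℕ) : ℝ) * (((500 * G * p : ℕ) : ℝ) * |del|) * 16 ^ ((5 * G * p * R) * 100)
          = (((100 : ℕ) : ℝ) * ((500 * G * p : ℕ) : ℝ)) * |del| * 16 ^ ((5 * G * p * R) * 100) := by ring
        _ ≤ Real.exp (0.1 * (l * ℒ)) * Real.exp (-(2 * l - 1) * ℒ) * Real.exp (1.6 * (l * ℒ)) := by
            gcongr
        _ = Real.exp (-(0.3 * l - 1) * ℒ) := by
            rw [← Real.exp_add, ← Real.exp_add]; congr 1; ring
        _ ≤ 1 := by
            rw [Real.exp_le_one_iff]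
            have : 0 ≤ (0.3 * (l : ℝ) - 1) * ℒ := by
              apply mul_nonneg <;> linarith
            linarith) nb hinj (by
      simp only [Fintype.card_prod, Fintype.card_fin]
      refine le_of_eq ?_
      ring) (500 * G * l) ((R + 99) * p) (by
      intro b g hg
      rw [hdiv b g hg, hdiv0]) (by
      intro b
      rw [hdiv0]; exact b.1.2.le) (by
      intro b g hg
      obtain ⟨_, _, h3⟩ := hnb b g hg
      have hb := b.1.2
      have h4 : (b.1 + 1) * l ≤ (500 * G * p) * l := Nat.mul_le_mul_right _ hb
      have h5 : (nb b + g) * p ≤ (500 * G * l) * p := by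
        calc _ ≤ (b.1 + 1) * l := by linarith
          _ ≤ _ := h4
          _ = _ := by ring
      have := Nat.le_of_mul_le_mul_right h5 hp0
      exact_mod_cast this) (by
      intro b g hg
      obtain ⟨h1, h2, h3⟩ := hnb b g hg
      have h4 : (nb b + g) * p % l + l * b.1 = (nb b + g) * p := by
        have := Nat.mod_add_div ((nb b + g) * p) l
        rwa [hdiv b g hg] at this
      have h5 : (nb b + g) * p % l ≤ (R + 99) * p := by
        have : l * (b.1 : ℕ) = b.1 * l := mul_comm _ _
        have : p * (R + 99) = (R + 99) * p := mul_comm _ _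
        omega
      exact_mod_cast h5) 1610000 (by norm_num) (by
      push_cast
      have hGpos : (0 : ℝ) ≤ G := by positivity
      have : (G : ℝ) * (0.999 * (l : ℝ)) ≤ G * (1000 * ((p : ℝ) * R)) := by gcongr
      have h0 : (0 : ℝ) ≤ G * l := by positivity
      linarith)
  have hlogy : Real.log 1610000 ≤ 14.3 := by
    rw [Real.log_le_iff_le_exp (by norm_num)]
    have h1 := Real.exp_one_gt_d9
    have h2 : Real.exp 14.3 = Real.exp 1 ^ 14 * Real.exp 0.3 := by
      rw [← Real.exp_nat_mul, ← Real.exp_add]; norm_num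
    have h3 : (1.3498 : ℝ) ≤ Real.exp 0.3 := by
      have := Real.sum_le_exp_of_nonneg (show (0 : ℝ) ≤ 0.3 by norm_num) 6
      refine le_trans ?_ this
      norm_num [Finset.sum_range_succ, Nat.factorial]
    rw [h2]
    calc (1610000 : ℝ) ≤ 2.7182818283 ^ 14 * 1.3498 := by norm_num
      _ ≤ _ := by gcongr
  have hlogN : Real.log (((5 * G * p * R) * 100 : ℕ) : ℝ) ≤ 10 ^ (-6 : ℤ) * (l * G) + 14 := by
    have hNpos : (0 : ℝ) < (((5 * G * p * R) * 100 : ℕ) : ℝ) := by linarith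
    obtain ⟨N, hN⟩ : ∃ N : ℝ, N = (((5 * G * p * R) * 100 : ℕ) : ℝ) := ⟨_, rfl⟩
    rw [← hN] at hNpos hNle ⊢
    have h1 : Real.log N = Real.log (N / 10 ^ 6) + Real.log (10 ^ 6) := by
      rw [← Real.log_mul (by positivity) (by positivity)]; congr 1; field_simp
    have h2 := Real.log_le_sub_one_of_pos (show 0 < N / 10 ^ 6 by positivity)
    have h3 : Real.log (10 ^ 6) ≤ 14.3 := by
      refine le_trans (Real.log_le_log (by norm_num) ?_) hlogy
      norm_num
    norm_num
    norm_num at h2 h3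
    rw [h1]
    norm_num
    linarith
  rw [hlog16] at hcore
  obtain ⟨N, hN⟩ : ∃ N : ℝ, N = (((5 * G * p * R) * 100 : ℕ) : ℝ) := ⟨_, rfl⟩
  rw [← hN] at hcore hlogN hNle hNge
  have hK : ((5 * G * p * R : ℕ) : ℝ) ≤ 0.005 * (l * G) := by
    rw [hN] at hNle
    push_cast at hNle ⊢
    linarith
  obtain ⟨K, hKK⟩ : ∃ K : ℝ, K = ((5 * G * p * R : ℕ) : ℝ) := ⟨_, rfl⟩
  have hK0 : 0 ≤ K := by rw [hKK]; positivity
  rw [← hKK] at hcore hK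
  push_cast at hcore
  have hlL : (l : ℝ) * ℒ ≤ l * G := by gcongr
  have t1 : ((R : ℝ) + 99) * p * ℒ ≤ 0.001001 * (l * G) := by
    have t0 : ((R : ℝ) + 99) * p ≤ 0.001001 * l := by linarith
    calc ((R : ℝ) + 99) * p * ℒ ≤ (0.001001 * l) * G :=
          mul_le_mul t0 hG (by linarith) (by positivity)
      _ = _ := by ring
  have t2 : (500 * (G : ℝ) * l) * Lam = 0.000025 * (l * ℒ) := by
    rw [hLam]
    field_simp; norm_num
  have t3 : (500 * (G : ℝ) * p) * ℒ ≤ 0.000005 * (l * G) := by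
    calc (500 * (G : ℝ) * p) * ℒ ≤ (500 * (G : ℝ) * p) * G := by gcongr
      _ = 0.000005 * ((p : ℝ) * (10 ^ 8 * G) * G) := by ring
      _ ≤ _ := by gcongr
  have t4 : K * (1 + Real.log 1610000) ≤ 0.0765 * (l * G) := by
    calc K * (1 + Real.log 1610000) ≤ (0.005 * (l * G)) * (1 + 14.3) := by gcongr
      _ = _ := by ring
  have t5 : 0.6931471803 * (N - 1) ≤ (N - 1) * Real.log 2 := by
    have : 0 ≤ N - 1 := by linarith
    rw [mul_comm]
    gcongr
  norm_num at hlogN hcore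
  linarith

theorem mv_irr (W : ℤ) (x : ℝ) (hx : x ^ 2 = W) (lo : ℤ) (h0 : 0 ≤ lo) (h1 : lo ^ 2 < W)
    (h2 : W < (lo + 1) ^ 2) : Irrational x := by
  refine irrational_nrt_of_notint_nrt 2 W hx ?_ (by norm_num)
  rintro ⟨y, rfl⟩
  have hy : y ^ 2 = W := by exact_mod_cast hx
  rw [← hy] at h1 h2
  have a1 := abs_lt_of_sq_lt_sq h2 (by omega)
  have a2 := sq_lt_sq.1 h1
  rw [abs_of_nonneg h0] at a2
  rcases abs_cases y with ⟨h, _⟩ | ⟨h, _⟩ <;> omega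

theorem mv_seq (ε r q : ℝ) (h0 : ε ≠ 0) (hr : ε + ε⁻¹ = r) (hw : ε - ε⁻¹ ≠ 0) (P : ℕ → ℝ)
    (hP0 : P 0 = 2) (hP1 : P 1 = r + q) (hrec : ∀ i, P (i + 2) = r * P (i + 1) - P i) (n : ℕ) :
    P n = (1 + q / (ε - ε⁻¹)) * ε ^ n + (1 - q / (ε - ε⁻¹)) * (ε ^ n)⁻¹ := by
  induction n using Nat.twoStepInduction with
  | zero => rw [hP0]; norm_num
  | one =>
    rw [hP1, pow_one, ← hr]
    have hd : q / (ε - ε⁻¹) * (ε - ε⁻¹) = q := div_mul_cancel₀ _ hw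
    linear_combination -hd
  | more n ih1 ih2 =>
    rw [hrec, ih1, ih2, ← hr]
    simp only [pow_succ, mul_inv]
    field_simp
    ring

theorem mv_del (U W u w : ℝ) (hU : 2 ≤ U) (hW : 2 ≤ W) (hu : 0 ≤ u) (hu1 : u ≤ 1) (hw : 0 ≤ w)
    (hw1 : w ≤ 1) (h : U + u / U = W + w / W) : |Real.log U - Real.log W| ≤ 4 / U ^ 2 := by
  have key : ∀ x y : ℝ, 2 ≤ x → x ≤ y → Real.log y - Real.log x ≤ (y - x) / x := by
    intro x y hx hxy
    rw [← Real.log_div (by linarith) (by linarith)]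
    refine (Real.log_le_sub_one_of_pos (by apply div_pos <;> linarith)).trans (le_of_eq ?_)
    field_simp
  have iU : u / U ≤ 1 / U := by gcongr
  have iW : w / W ≤ 1 / W := by gcongr
  have iU0 : 0 ≤ u / U := by positivity
  have iW0 : 0 ≤ w / W := by positivity
  rcases le_total U W with hle | hle
  · have h1 := key U W hU hle
    have h2 : Real.log U ≤ Real.log W := Real.log_le_log (by linarith) hle
    rw [abs_sub_comm, abs_of_nonneg (by linarith)]
    refine h1.trans ?_
    calc (W - U) / U ≤ (1 / U) / U := by
          gcongr; linarith
      _ = 1 / U ^ 2 := by field_simp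
      _ ≤ _ := by gcongr; norm_num
  · have h1 := key W U hW hle
    have h2 : Real.log W ≤ Real.log U := Real.log_le_log (by linarith) hle
    rw [abs_of_nonneg (by linarith)]
    refine h1.trans ?_
    have h3 : 1 / W ≤ 1 / 2 := by gcongr
    have h4 : U / 2 ≤ W := by linarith
    calc (U - W) / W ≤ (1 / W) / W := by
          gcongr; linarith
      _ = 1 / W ^ 2 := by field_simp
      _ ≤ 1 / (U / 2) ^ 2 := by gcongr
      _ = _ := by field_simp; norm_num

theorem mv_ne (ℒ A : ℝ) (hℒ : 0 < ℒ) (r s : ℤ)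
    (hε : Real.exp ℒ + (Real.exp ℒ)⁻¹ = r) (hα : Real.exp A + (Real.exp A)⁻¹ = s)
    (hw : Irrational (Real.exp ℒ - (Real.exp ℒ)⁻¹)) (hv : Irrational (Real.exp A - (Real.exp A)⁻¹))
    (hwv : Irrational ((Real.exp ℒ - (Real.exp ℒ)⁻¹) * (Real.exp A - (Real.exp A)⁻¹)))
    (he : ∀ i, (![Real.exp ℒ, Real.exp ℒ, (Real.exp ℒ)⁻¹, (Real.exp ℒ)⁻¹] : Fin 4 → ℝ) i ^ 2
      = r * (![Real.exp ℒ, Real.exp ℒ, (Real.exp ℒ)⁻¹, (Real.exp ℒ)⁻¹] : Fin 4 → ℝ) i - 1)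
    (hg : ∀ i, (![Real.exp A, (Real.exp A)⁻¹, Real.exp A, (Real.exp A)⁻¹] : Fin 4 → ℝ) i ^ 2
      = s * (![Real.exp A, (Real.exp A)⁻¹, Real.exp A, (Real.exp A)⁻¹] : Fin 4 → ℝ) i - 1)
    (p : ℕ) (q : ℤ) (hp : 0 < p) : (p : ℝ) * ℒ - q * A ≠ 0 := by
  intro h
  have hem : (![Real.exp ℒ, Real.exp ℒ, (Real.exp ℒ)⁻¹, (Real.exp ℒ)⁻¹] : Fin 4 → ℝ) ∈
    mvRing _ _ r s he hg := ⟨0, 1, 0, 0, fun i => by simp⟩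
  have hf := Subring.sub_mem _ (Subring.pow_mem _ hem p) (mv_zpow_mem _ _ r s he hg q)
  obtain ⟨B0, B1, B2, B3, hB⟩ := hf
  have h0 := hB 0
  have h1 := hB 1
  have h2 := hB 2
  have h3 := hB 3
  simp at h0 h1 h2 h3
  have e0 : Real.exp ℒ ^ p = Real.exp A ^ q := by
    rw [← Real.exp_nat_mul, ← mv_exp_int]; congr 1; linarith
  have n1 : Real.exp ℒ ^ p - (Real.exp A ^ q)⁻¹ ≠ 0 := by
    rw [← e0, ← Real.exp_nat_mul, ← Real.exp_neg]
    have : (0 : ℝ) < p * ℒ := by positivity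
    have h5 : Real.exp (-(p * ℒ)) < Real.exp (p * ℒ) := Real.exp_lt_exp.2 (by linarith)
    linarith
  have key := mv_liouville (Real.exp ℒ) (Real.exp A)⁻¹ r s (Real.exp_pos _).ne'
    (inv_ne_zero (Real.exp_pos _).ne') hε (by rw [inv_inv, add_comm]; exact hα) hw
    (by rw [inv_inv, ← neg_sub]; exact hv.neg)
    (by rw [inv_inv, ← neg_sub (Real.exp A), mul_neg]; exact hwv.neg)
    ![Real.exp ℒ ^ p - (Real.exp A ^ q)⁻¹, Real.exp ℒ ^ p - Real.exp A ^ q,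
      (Real.exp ℒ ^ p)⁻¹ - (Real.exp A ^ q)⁻¹, (Real.exp ℒ ^ p)⁻¹ - Real.exp A ^ q]
    ⟨B0, B1, B2, B3, by
      intro i
      fin_cases i
      · simpa using h1
      · simpa using h0
      · simpa using h3
      · simpa using h2⟩ (by simpa using n1)
  simp [e0] at key
  norm_num at key


theorem mv_X (a w σ : ℝ) (ha : 0 < a) (hw : 0 < w) (hw2 : 2.7 * a ^ 2 ≤ w ^ 2) (hσ : σ = 1 ∨ σ = -1) :
    0.38 ≤ 1 + σ * a / w ∧ |Real.log (1 + σ * a / w)| ≤ 1 ∧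
      0 ≤ (1 + σ * a / w) * (1 - σ * a / w) ∧ (1 + σ * a / w) * (1 - σ * a / w) ≤ 1 := by
  have h1 : a / w ≤ 0.62 := by
    rw [div_le_iff₀ hw]
    nlinarith
  have h0 : 0 < a / w := by positivity
  have e1 := Real.exp_one_gt_d9
  have gen : ∀ x : ℝ, |x| ≤ 0.62 → 0.38 ≤ 1 + x ∧ |Real.log (1 + x)| ≤ 1 ∧
      0 ≤ (1 + x) * (1 - x) ∧ (1 + x) * (1 - x) ≤ 1 := by
    intro x hx
    obtain ⟨hx1, hx2⟩ := abs_le.1 hx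
    have hA : 0 ≤ 1 + x := by norm_num at hx1 ⊢; linarith
    have hB : 0 ≤ 1 - x := by norm_num at hx2 ⊢; linarith
    refine ⟨by norm_num at hx1 ⊢; linarith, ?_, mul_nonneg hA hB, by nlinarith [sq_nonneg x]⟩
    rw [abs_le]
    constructor
    · rw [Real.le_log_iff_exp_le (by linarith), Real.exp_neg]
      rw [inv_le_comm₀ (Real.exp_pos _) (by linarith)]
      have : (1 + x)⁻¹ ≤ 0.38⁻¹ := by gcongr; linarith
      refine this.trans ?_
      norm_num
      linarith
    · rw [Real.log_le_iff_le_exp (by linarith)]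
      linarith
  have := gen (σ * a / w) (by
    rcases hσ with rfl | rfl
    · rw [one_mul, abs_of_pos h0]; exact h1
    · rw [neg_one_mul, neg_div, abs_neg, abs_of_pos h0]; exact h1)
  exact this

theorem mv_sqZ (x y : ℤ) (h : x ^ 2 ≤ y ^ 2) (hy : 0 ≤ y) : x ≤ y :=
  (le_abs_self x).trans (abs_le_of_sq_le_sq h hy)

theorem mv_sqR (x y : ℝ) (h : x ^ 2 ≤ y ^ 2) (hy : 0 ≤ y) : x ≤ y :=
  (le_abs_self x).trans (abs_le_of_sq_le_sq h hy)

theorem mv_ints (k a r c s : ℤ) (hk1 : 7 ≤ k) (hk2 : k ≤ 13)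
    (ha2 : 10864 ≤ a) (hr : 0 < r) (hr2 : k * a ^ 2 + 4 = r ^ 2)
    (hc : c = a + k * a - 2 * r) (hs : s = r - a) :
    26 * a ≤ 10 * r ∧ 100 * r ≤ 361 * a ∧ 27 * a ≤ 10 * c ∧ a * c = s ^ 2 - 4 ∧ 16 * a ≤ 10 * s ∧
    (r * s - 5) ^ 2 < (r ^ 2 - 4) * (s ^ 2 - 4) ∧ (r ^ 2 - 4) * (s ^ 2 - 4) < (r * s - 5 + 1) ^ 2 ∧
    0 ≤ r * s - 5 := by
  have hka : 7 * a ^ 2 ≤ k * a ^ 2 := mul_le_mul_of_nonneg_right hk1 (sq_nonneg a)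
  have hka' : k * a ^ 2 ≤ 13 * a ^ 2 := mul_le_mul_of_nonneg_right hk2 (sq_nonneg a)
  have ha3 : 10864 ^ 2 ≤ a ^ 2 := by gcongr
  have r1 : 26 * a ≤ 10 * r := mv_sqZ _ _ (by linarith) (by linarith)
  have r2 : 100 * r ≤ 361 * a := mv_sqZ _ _ (by linarith) (by linarith)
  have hs1 : 16 * a ≤ 10 * s := by linarith
  have hrs : 416 * a ^ 2 ≤ 100 * (r * s) := by
    have : (26 * a) * (16 * a) ≤ (10 * r) * (10 * s) := by gcongr
    linarith
  refine ⟨r1, r2, ?_, ?_, hs1, ?_, ?_, ?_⟩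
  · have : 20 * r ≤ (10 * k - 17) * a := by
      refine mv_sqZ _ _ ?_ (mul_nonneg (by linarith) (by linarith))
      have h2 : 9 ≤ (10 * k - 17) ^ 2 - 400 * k := by nlinarith
      have h3 : 9 * a ^ 2 ≤ ((10 * k - 17) ^ 2 - 400 * k) * a ^ 2 := by gcongr
      linarith
    linarith
  · rw [hc, hs]; linear_combination hr2
  · have : (r * s - 5) ^ 2 - (r ^ 2 - 4) * (s ^ 2 - 4) = 4 * (r - s) ^ 2 - 2 * (r * s) + 9 := by ring
    have h2 : r - s = a := by linarith
    rw [h2] at this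
    linarith
  · have : (r * s - 5 + 1) ^ 2 - (r ^ 2 - 4) * (s ^ 2 - 4) = 4 * (r - s) ^ 2 := by ring
    have h2 : r - s = a := by linarith
    rw [h2] at this
    linarith
  · linarith

theorem mv_unit (x : ℝ) (hx : 4 ≤ x) : ∃ e : ℝ, 1 < e ∧ e + e⁻¹ = x ∧ (e - e⁻¹) ^ 2 = x ^ 2 - 4 ∧
      x - 1 ≤ e ∧ e ≤ x ∧ 0 < e - e⁻¹ := by
  have hsq : Real.sqrt (x ^ 2 - 4) ^ 2 = x ^ 2 - 4 := Real.sq_sqrt (by nlinarith)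
  have hs0 : 0 ≤ Real.sqrt (x ^ 2 - 4) := Real.sqrt_nonneg _
  obtain ⟨t, ht⟩ : ∃ t, t = Real.sqrt (x ^ 2 - 4) := ⟨_, rfl⟩
  rw [← ht] at hsq hs0
  have hinv : ((x + t) / 2)⁻¹ = (x - t) / 2 := by
    apply inv_eq_of_mul_eq_one_right
    linear_combination -hsq / 4
  have htx : t ≤ x := mv_sqR _ _ (by linarith) (by linarith)
  have htx' : x - 2 ≤ t := mv_sqR _ _ (by linarith) hs0
  refine ⟨(x + t) / 2, by linarith, ?_, ?_, ?_, ?_, ?_⟩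
  · rw [hinv]; ring
  · rw [hinv]; linear_combination hsq
  · linarith
  · linarith
  · rw [hinv]; linarith

theorem mv_sqirr (r : ℤ) (w : ℝ) (hr : 4 ≤ r) (h : w ^ 2 = (r : ℝ) ^ 2 - 4) : Irrational w :=
  mv_irr (r ^ 2 - 4) w (by push_cast; exact h) (r - 1) (by linarith) (by nlinarith) (by nlinarith)

set_option maxHeartbeats 1000000 in
theorem mv_main (k a r c s : ℤ) (hk1 : 7 ≤ k) (hk2 : k ≤ 13)
    (ha2 : 10864 ≤ a) (hr : 0 < r) (hr2 : k * a ^ 2 + 4 = r ^ 2)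
    (hc : c = a + k * a - 2 * r) (hs : s = r - a) (hac : a < c) (hcb : c < k * a)
    (σ τ : ℤ) (hσ : σ = 1 ∨ σ = -1) (hτ : τ = 1 ∨ τ = -1)
    (P Q : ℕ → ℤ) (hP0 : P 0 = 2) (hP1 : P 1 = r + σ * a)
    (hPrec : ∀ i : ℕ, P (i + 2) = r * P (i + 1) - P i)
    (hQ0 : Q 0 = 2) (hQ1 : Q 1 = s + τ * a)
    (hQrec : ∀ i : ℕ, Q (i + 2) = s * Q (i + 1) - Q i)
    (l m : ℕ) (hl : 1 ≤ l) (hm : 1 ≤ m) (heq : Q m = P l) (Y : ℝ)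
    (hY : Y = Real.log (21.3 * (a : ℝ)))
    (hcon : 1.336 * 10 ^ 14 * Y ^ 2 * Real.log (Real.exp 1 * (m : ℝ)) ≤ m) : False := by
  obtain ⟨r1, r2, c1, hacs, hs1, hrs1, hrs2, hrs0⟩ := mv_ints k a r c s hk1 hk2 ha2 hr hr2 hc hs
  -- reals
  have haR : (10864 : ℝ) ≤ a := by exact_mod_cast ha2
  have r1R : 2.6 * (a : ℝ) ≤ r := by
    have : 26 * (a : ℝ) ≤ 10 * r := by exact_mod_cast r1
    linarith
  have r2R : (r : ℝ) ≤ 3.61 * a := by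
    have : 100 * (r : ℝ) ≤ 361 * a := by exact_mod_cast r2
    linarith
  have s1R : 1.6 * (a : ℝ) ≤ s := by
    have : 16 * (a : ℝ) ≤ 10 * s := by exact_mod_cast hs1
    linarith
  have c1R : 2.7 * (a : ℝ) ≤ c := by
    have : 27 * (a : ℝ) ≤ 10 * c := by exact_mod_cast c1
    linarith
  have hsR : (s : ℝ) = r - a := by exact_mod_cast hs
  have hcbR : (c : ℝ) ≤ k * a := by exact_mod_cast hcb.le
  have hk1R : (7 : ℝ) ≤ k := by exact_mod_cast hk1
  have hk2R : (k : ℝ) ≤ 13 := by exact_mod_cast hk2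
  have hr2R : (k : ℝ) * a ^ 2 + 4 = r ^ 2 := by exact_mod_cast hr2
  have hacsR : (a : ℝ) * c = s ^ 2 - 4 := by exact_mod_cast hacs
  have haRp : (0 : ℝ) < a := by linarith
  obtain ⟨ε, e1, e2, e3, e4, e5, e6⟩ := mv_unit r (by linarith)
  obtain ⟨α, f1, f2, f3, f4, f5, f6⟩ := mv_unit s (by linarith)
  have ε0 : 0 < ε := by linarith
  have α0 : 0 < α := by linarith
  obtain ⟨ℒ, hL⟩ : ∃ x, x = Real.log ε := ⟨_, rfl⟩
  obtain ⟨A, hA⟩ : ∃ x, x = Real.log α := ⟨_, rfl⟩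
  have hLe : Real.exp ℒ = ε := by rw [hL]; exact Real.exp_log ε0
  have hAe : Real.exp A = α := by rw [hA]; exact Real.exp_log α0
  obtain ⟨w, hw⟩ : ∃ w, w = ε - ε⁻¹ := ⟨_, rfl⟩
  obtain ⟨v, hv⟩ : ∃ v, v = α - α⁻¹ := ⟨_, rfl⟩
  rw [← hw] at e3 e6
  rw [← hv] at f3 f6
  have hw2 : w ^ 2 = k * a ^ 2 := by linarith
  have hv2 : v ^ 2 = a * c := by linarith
  have wirr : Irrational w := mv_sqirr r w (by linarith) e3
  have virr : Irrational v := mv_sqirr s v (by linarith) f3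
  have wvirr : Irrational (w * v) :=
    mv_irr ((r ^ 2 - 4) * (s ^ 2 - 4)) (w * v) (by push_cast; rw [mul_pow, e3, f3])
      (r * s - 5) hrs0 hrs1 hrs2
  have exp10 : Real.exp 10 ≤ 22030 := by
    have h1 := Real.exp_one_lt_d9
    have h2 : Real.exp 10 = Real.exp 1 ^ 10 := by rw [← Real.exp_nat_mul]; norm_num
    rw [h2]
    calc Real.exp 1 ^ 10 ≤ 2.7182818286 ^ 10 := by gcongr
      _ ≤ _ := by norm_num
  have hL10 : 10 ≤ ℒ := by
    rw [hL, Real.le_log_iff_exp_le ε0]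
    linarith
  have hA0 : 0 < A := by rw [hA]; exact Real.log_pos f1
  have hAL : A ≤ ℒ := by
    rw [hA, hL]; exact Real.log_le_log α0 (by linarith)
  have hA2 : ℒ ≤ 2 * A := by
    rw [hA, hL]
    have : Real.log ε ≤ Real.log (α ^ 2) := Real.log_le_log ε0 (by
      have h1 : 4 * α ≤ α * α := by gcongr; linarith
      linarith)
    rw [Real.log_pow] at this
    exact_mod_cast this
  have hYL : ℒ + 1 ≤ Y := by
    have h1 := Real.exp_one_lt_d9
    have : Real.log (ε * Real.exp 1) ≤ Y := by
      rw [hY]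
      refine Real.log_le_log (by positivity) ?_
      have : ε * Real.exp 1 ≤ (3.61 * a) * 2.72 := by gcongr <;> linarith
      linarith
    rwa [Real.log_mul (by positivity) (by positivity), Real.log_exp, ← hL] at this
  -- X1, X2
  have hσR : (σ : ℝ) = 1 ∨ (σ : ℝ) = -1 := by
    rcases hσ with rfl | rfl <;> simp
  have hτR : (τ : ℝ) = 1 ∨ (τ : ℝ) = -1 := by
    rcases hτ with rfl | rfl <;> simp
  obtain ⟨x1, x2, x3, x4⟩ := mv_X a w σ haRp e6 (by rw [hw2]; gcongr; linarith) hσR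
  obtain ⟨z1, z2, z3, z4⟩ := mv_X a v τ haRp f6 (by
    rw [hv2]
    have : (a : ℝ) * (2.7 * a) ≤ a * c := by gcongr
    linarith) hτR
  have hPl := mv_seq ε r (σ * a) ε0.ne' e2 (by rw [← hw]; exact e6.ne') (fun i => (P i : ℝ))
    (by simp only [hP0]; norm_num) (by simp only [hP1]; push_cast; ring)
    (fun i => by simp only [hPrec]; push_cast; ring) l
  have hQm := mv_seq α s (τ * a) α0.ne' f2 (by rw [← hv]; exact f6.ne') (fun i => (Q i : ℝ))
    (by simp only [hQ0]; norm_num) (by simp only [hQ1]; push_cast; ring)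
    (fun i => by simp only [hQrec]; push_cast; ring) m
  rw [← hw] at hPl
  rw [← hv] at hQm
  obtain ⟨X1, hX1⟩ : ∃ x, x = 1 + (σ : ℝ) * a / w := ⟨_, rfl⟩
  obtain ⟨X2, hX2⟩ : ∃ x, x = 1 + (τ : ℝ) * a / v := ⟨_, rfl⟩
  obtain ⟨X1', hX1'⟩ : ∃ x, x = 1 - (σ : ℝ) * a / w := ⟨_, rfl⟩
  obtain ⟨X2', hX2'⟩ : ∃ x, x = 1 - (τ : ℝ) * a / v := ⟨_, rfl⟩
  rw [← hX1] at x1 x2 x3 x4 hPl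
  rw [← hX1'] at x3 x4 hPl
  rw [← hX2] at z1 z2 z3 z4 hQm
  rw [← hX2'] at z3 z4 hQm
  have X1p : 0 < X1 := by linarith
  have X2p : 0 < X2 := by linarith
  have hεl : ε ≤ ε ^ l := le_self_pow₀ e1.le (by omega)
  have hαm : α ≤ α ^ m := le_self_pow₀ f1.le (by omega)
  have hUW : X1 * ε ^ l + X1 * X1' / (X1 * ε ^ l) = X2 * α ^ m + X2 * X2' / (X2 * α ^ m) := by
    have h1 : X1 * X1' / (X1 * ε ^ l) = X1' * (ε ^ l)⁻¹ := by field_simp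
    have h2 : X2 * X2' / (X2 * α ^ m) = X2' * (α ^ m)⁻¹ := by field_simp
    rw [h1, h2, ← hPl, ← hQm, heq]
  have hU2 : 2 ≤ X1 * ε ^ l := by
    have : 0.38 * 10 ≤ X1 * ε ^ l := by gcongr; linarith
    linarith
  have hW2 : 2 ≤ X2 * α ^ m := by
    have : 0.38 * 10 ≤ X2 * α ^ m := by gcongr; linarith
    linarith
  have hd := mv_del _ _ _ _ hU2 hW2 x3 x4 z3 z4 hUW
  obtain ⟨κ, hκ⟩ : ∃ κ, κ = Real.log X1 - Real.log X2 := ⟨_, rfl⟩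
  have hκ2 : |κ| ≤ 2 := by
    rw [hκ]; refine (abs_sub _ _).trans ?_; linarith
  have hdel : Real.log (X1 * ε ^ l) - Real.log (X2 * α ^ m) = l * ℒ - m * A + κ := by
    rw [Real.log_mul X1p.ne' (by positivity), Real.log_mul X2p.ne' (by positivity), Real.log_pow,
      Real.log_pow, hκ, hL, hA]; ring
  rw [hdel] at hd
  have hdel' : |l * ℒ - m * A + κ| ≤ Real.exp (-(2 * l - 1) * ℒ) := by
    refine hd.trans ?_
    have h1 : Real.exp (-(2 * l - 1) * ℒ) = ε / (ε ^ l) ^ 2 := by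
      rw [← hLe, ← Real.exp_nat_mul, ← Real.exp_nat_mul, ← Real.exp_sub]
      congr 1; push_cast; ring
    rw [h1, div_le_div_iff₀ (by positivity) (by positivity), mul_pow]
    have h2 : 4 ≤ ε * X1 ^ 2 := by
      have : 100 * 0.38 ^ 2 ≤ ε * X1 ^ 2 := by gcongr; linarith
      linarith
    have h3 : 0 ≤ (ε ^ l) ^ 2 := by positivity
    have h4 : 4 * (ε ^ l) ^ 2 ≤ (ε * X1 ^ 2) * (ε ^ l) ^ 2 := by gcongr
    linarith
  have hdel1 : |l * ℒ - m * A + κ| ≤ 1 := by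
    refine hdel'.trans ?_
    rw [Real.exp_le_one_iff]
    have : (1 : ℝ) ≤ l := by exact_mod_cast hl
    have : 0 ≤ (2 * (l : ℝ) - 1) * ℒ := by apply mul_nonneg <;> linarith
    linarith
  -- size of m and l
  have hm1 : (1 : ℝ) ≤ m := by exact_mod_cast hm
  have hml : (m : ℝ) ≤ 2 * l + 1 := by
    have h1 := (abs_le.1 hdel1).1
    have h2 := (abs_le.1 hκ2).2
    have h3 : (m : ℝ) * ℒ ≤ m * (2 * A) := by gcongr
    have h4 : (m : ℝ) * ℒ ≤ (2 * l + 1) * ℒ := by linarith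
    exact le_of_mul_le_mul_right h4 (by linarith)
  have hlogm : Real.log (Real.exp 1 * (m : ℝ)) = 1 + Real.log m := by
    rw [Real.log_mul (Real.exp_pos _).ne' (by linarith), Real.log_exp]
  rw [hlogm] at hcon
  have hY11 : 11 ≤ Y := by linarith
  have hY2 : 121 ≤ Y ^ 2 := by
    have : (11 : ℝ) ^ 2 ≤ Y ^ 2 := by gcongr
    linarith
  have hlm0 : 0 ≤ Real.log m := Real.log_nonneg hm1
  have hm2 : (1.336 * 10 ^ 16 : ℝ) ≤ m := by
    refine le_trans ?_ hcon
    have : (1.336 * 10 ^ 14 * 121 * 1 : ℝ) ≤ 1.336 * 10 ^ 14 * Y ^ 2 * (1 + Real.log m) := by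
      gcongr; linarith
    linarith
  have hlm : 34 ≤ Real.log m := by
    rw [Real.le_log_iff_exp_le (by linarith)]
    refine le_trans ?_ hm2
    have h1 := Real.exp_one_lt_d9
    have h2 : Real.exp 34 = Real.exp 1 ^ 34 := by rw [← Real.exp_nat_mul]; norm_num
    rw [h2]
    calc Real.exp 1 ^ 34 ≤ 2.7182818286 ^ 34 := by gcongr
      _ ≤ _ := by norm_num
  have hm3 : 4.676 * 10 ^ 15 * Y ^ 2 ≤ m := by
    refine le_trans ?_ hcon
    have : 1.336 * 10 ^ 14 * Y ^ 2 * 35 ≤ 1.336 * 10 ^ 14 * Y ^ 2 * (1 + Real.log m) := by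
      gcongr; linarith
    linarith
  have hG1 : ℒ ≤ (⌈ℒ⌉₊ : ℝ) := Nat.le_ceil _
  have hG2 : (⌈ℒ⌉₊ : ℝ) < ℒ + 1 := Nat.ceil_lt_add_one (by linarith)
  obtain ⟨G, hG⟩ : ∃ G, G = ⌈ℒ⌉₊ := ⟨_, rfl⟩
  rw [← hG] at hG1 hG2
  have hlG : 2 * 10 ^ 15 * G ^ 2 ≤ l := by
    have : 2 * 10 ^ 15 * (G : ℝ) ^ 2 ≤ l := by
      have h1 : (G : ℝ) ^ 2 ≤ Y ^ 2 := by gcongr; linarith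
      linarith
    exact_mod_cast this
  -- algebra
  have hε' : Real.exp ℒ + (Real.exp ℒ)⁻¹ = r := by rw [hLe]; exact e2
  have hα' : Real.exp A + (Real.exp A)⁻¹ = s := by rw [hAe]; exact f2
  have hw' : Irrational (Real.exp ℒ - (Real.exp ℒ)⁻¹) := by rw [hLe, ← hw]; exact wirr
  have hv' : Irrational (Real.exp A - (Real.exp A)⁻¹) := by rw [hAe, ← hv]; exact virr
  have hwv' : Irrational ((Real.exp ℒ - (Real.exp ℒ)⁻¹) * (Real.exp A - (Real.exp A)⁻¹)) := by
    rw [hLe, hAe, ← hw, ← hv]; exact wvirr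
  have hεε : ε * ε⁻¹ = 1 := mul_inv_cancel₀ ε0.ne'
  have hαα : α * α⁻¹ = 1 := mul_inv_cancel₀ α0.ne'
  have he : ∀ i, (![Real.exp ℒ, Real.exp ℒ, (Real.exp ℒ)⁻¹, (Real.exp ℒ)⁻¹] : Fin 4 → ℝ) i ^ 2
      = r * (![Real.exp ℒ, Real.exp ℒ, (Real.exp ℒ)⁻¹, (Real.exp ℒ)⁻¹] : Fin 4 → ℝ) i - 1 := by
    rw [hLe, ← e2]
    intro i
    fin_cases i <;> simp only [Fin.zero_eta, Fin.mk_one, Fin.reduceFinMk, Matrix.cons_val] <;>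
      linear_combination -hεε
  have hg : ∀ i, (![Real.exp A, (Real.exp A)⁻¹, Real.exp A, (Real.exp A)⁻¹] : Fin 4 → ℝ) i ^ 2
      = s * (![Real.exp A, (Real.exp A)⁻¹, Real.exp A, (Real.exp A)⁻¹] : Fin 4 → ℝ) i - 1 := by
    rw [hAe, ← f2]
    intro i
    fin_cases i <;> simp only [Fin.zero_eta, Fin.mk_one, Fin.reduceFinMk, Matrix.cons_val] <;>
      linear_combination -hαα
  let Bt : Fin 4 → ℝ := fun t =>
    ((c - τ * s : ℤ) + ((2 * τ : ℤ) : ℝ) * (![Real.exp A, (Real.exp A)⁻¹, Real.exp A, (Real.exp A)⁻¹] : Fin 4 → ℝ) t) *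
    ((k * a + σ * r : ℤ) + ((-2 * σ : ℤ) : ℝ) * (![Real.exp ℒ, Real.exp ℒ, (Real.exp ℒ)⁻¹, (Real.exp ℒ)⁻¹] : Fin 4 → ℝ) t)
  have hBt : Bt ∈ mvRing _ _ r s he hg := by
    refine Subring.mul_mem _ (x := fun t => ((c - τ * s : ℤ) : ℝ) + ((2 * τ : ℤ) : ℝ) *
      (![Real.exp A, (Real.exp A)⁻¹, Real.exp A, (Real.exp A)⁻¹] : Fin 4 → ℝ) t)
      (y := fun t => ((k * a + σ * r : ℤ) : ℝ) + ((-2 * σ : ℤ) : ℝ) *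
      (![Real.exp ℒ, Real.exp ℒ, (Real.exp ℒ)⁻¹, (Real.exp ℒ)⁻¹] : Fin 4 → ℝ) t) ?_ ?_
    · exact ⟨c - τ * s, 0, 2 * τ, 0, fun i => by push_cast; ring⟩
    · exact ⟨k * a + σ * r, -2 * σ, 0, 0, fun i => by push_cast; ring⟩
  have hcpos : (0 : ℝ) < c := by linarith
  have hvc : v ≤ c := by
    refine mv_sqR _ _ ?_ hcpos.le
    rw [hv2, sq]
    gcongr
  have hwk : w ≤ k * a := by
    have : w ^ 2 ≤ (k * a) ^ 2 := by
      rw [hw2, mul_pow]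
      have : (k : ℝ) ≤ k ^ 2 := le_self_pow₀ (by linarith) (by norm_num)
      gcongr
    exact mv_sqR _ _ this (by positivity)
  have hcube : 4 * (c * (k * a)) ≤ Real.exp (3 * ℒ) := by
    have h1 : Real.exp (3 * ℒ) = ε ^ 3 := by
      rw [← hLe, ← Real.exp_nat_mul]; norm_num
    have h2 : (2 * (a : ℝ)) ^ 3 ≤ ε ^ 3 := by gcongr; linarith
    have h3 : (k : ℝ) * a ≤ 13 * a := by gcongr
    have h4 : (c : ℝ) * (k * a) ≤ (13 * a) * (13 * a) := by
      gcongr; linarith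
    rw [h1]
    have h5 : 10864 * (a : ℝ) ^ 2 ≤ a * a ^ 2 := by gcongr
    have h6 : 0 ≤ (a : ℝ) ^ 2 := by positivity
    linarith
  have hBt' : ∀ t, |Bt t| ≤ Real.exp (3 * ℒ) := by
    intro t
    have h1 : |((c - τ * s : ℤ) : ℝ) + ((2 * τ : ℤ) : ℝ) *
      (![Real.exp A, (Real.exp A)⁻¹, Real.exp A, (Real.exp A)⁻¹] : Fin 4 → ℝ) t| ≤ 2 * c := by
      push_cast
      rw [hAe, abs_le, ← f2]
      rcases hτR with h | h <;> rw [h] <;> fin_cases t <;>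
        simp only [Fin.zero_eta, Fin.mk_one, Fin.reduceFinMk, Matrix.cons_val] <;>
        constructor <;> linarith
    have h2 : |((k * a + σ * r : ℤ) : ℝ) + ((-2 * σ : ℤ) : ℝ) *
      (![Real.exp ℒ, Real.exp ℒ, (Real.exp ℒ)⁻¹, (Real.exp ℒ)⁻¹] : Fin 4 → ℝ) t| ≤ 2 * (k * a) := by
      push_cast
      rw [hLe, abs_le, ← e2]
      rcases hσR with h | h <;> rw [h] <;> fin_cases t <;>
        simp only [Fin.zero_eta, Fin.mk_one, Fin.reduceFinMk, Matrix.cons_val] <;>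
        constructor <;> linarith
    simp only [Bt]
    rw [abs_mul]
    refine le_trans (mul_le_mul h1 h2 (abs_nonneg _) (by positivity)) ?_
    linarith
  have hD0z : 0 < (k - 1) * c * a := by
    have : 0 < k - 1 := by omega
    have : 0 < c := by omega
    have : 0 < a := by omega
    positivity
  obtain ⟨D0, hD0⟩ := Int.eq_ofNat_of_zero_le hD0z.le
  have hD0R : (D0 : ℝ) = (k - 1) * c * a := by
    have : ((D0 : ℤ) : ℝ) = (((k - 1) * c * a : ℤ) : ℝ) := by rw [hD0]
    push_cast at this
    exact this
  have hexpκ : Real.exp (-κ) = X2 / X1 := by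
    rw [hκ, neg_sub, Real.exp_sub, Real.exp_log X1p, Real.exp_log X2p]
  have hB0 : Bt 0 = D0 * Real.exp (-κ) := by
    have hb : Bt 0 = (c + τ * v) * (k * a - σ * w) := by
      simp only [Bt, Matrix.cons_val_zero]
      rw [hLe, hAe, hv, hw]
      push_cast
      rw [← e2, ← f2]
      ring
    rw [hb, hexpκ, hD0R, mul_div_assoc', eq_div_iff X1p.ne', hX1, hX2]
    have hσ2 : (σ : ℝ) ^ 2 = 1 := by rcases hσR with h | h <;> rw [h] <;> norm_num
    field_simp
    have q1 : (k * a - σ * w) * (w + σ * a) = (k - 1) * a * w := by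
      linear_combination (-σ) * hw2 + (k * a ^ 2 * 0 - a * w) * hσ2
    have q2 : (c + τ * v) * v = c * (v + τ * a) := by
      linear_combination τ * hv2
    linear_combination (c + τ * v) * v * q1 + (k - 1) * a * w * q2
  refine mv_final ℒ A hL10 hA0 hAL r s hε' hα' hw' hv' hwv' he hg D0 ?_ ?_ Bt hBt hBt' κ hB0
    (by linarith) l m _ rfl hdel'
    (fun p q hp => mv_ne ℒ A (by linarith) r s hε' hα' hw' hv' hwv' he hg p q hp) G hG1
    (by linarith) hlG
  · have : (0 : ℤ) < D0 := by omega
    exact_mod_cast this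
  · rw [hD0R]
    have : 0 < (c : ℝ) * a := by positivity
    have h5 : ((k : ℝ) - 1) * (c * a) ≤ k * (c * a) := by gcongr; linarith
    have h6 : 0 ≤ (c : ℝ) * (k * a) := by positivity
    linarith

/-- For `k ∈ {7,8,10,11,12,13}`, `a ≥ 10864`, `b = ka`, `c = c₁⁻ = a + b − 2r`, `s = r − a`,
with a solution of Type 1: if `Q_m = P_l` with `l ≥ 1` and `m ≥ 1`, then
`m / log(e·m) < 1.336·10¹⁴ · (log(21.3·a))²`. -/
theorem matveev_upper_bound_c1_minus
    (k a r b c s : ℤ)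
    (hk : k ∈ ({7, 8, 10, 11, 12, 13} : Set ℤ)) (ha : 0 < a) (ha2 : 10864 ≤ a)
    (hr : 0 < r) (hr2 : k * a ^ 2 + 4 = r ^ 2) (hb : b = k * a)
    (hc : c = a + b - 2 * r) (hs : s = r - a) (hac : a < c) (hcb : c < b)
    (x₂ y₂ x₀ z₀ : ℤ)
    (hx₂ : x₂ = 2) (hy₂ : y₂ = 2 ∨ y₂ = -2) (hx₀ : x₀ = 2) (hz₀ : z₀ = 2 ∨ z₀ = -2)
    (P Q : ℕ → ℤ)
    (hP0 : P 0 = x₂) (hP1 : 2 * P 1 = r * x₂ + a * y₂)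
    (hPrec : ∀ i : ℕ, P (i + 2) = r * P (i + 1) - P i)
    (hQ0 : Q 0 = x₀) (hQ1 : 2 * Q 1 = s * x₀ + a * z₀)
    (hQrec : ∀ i : ℕ, Q (i + 2) = s * Q (i + 1) - Q i)
    (l m : ℕ) (hl : 1 ≤ l) (hm : 1 ≤ m) (heq : Q m = P l) :
    (m : ℝ) / Real.log (Real.exp 1 * (m : ℝ)) <
      1.336 * 10 ^ 14 * (Real.log (21.3 * (a : ℝ))) ^ 2 := by
  have hk' : 7 ≤ k ∧ k ≤ 13 := by
    simp only [Set.mem_insert_iff, Set.mem_singleton_iff] at hk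
    omega
  subst hb hx₂ hx₀
  by_contra hcon
  have hlog : 0 < Real.log (Real.exp 1 * (m : ℝ)) := by
    have hm' : (1 : ℝ) ≤ m := by exact_mod_cast hm
    have he := Real.exp_one_gt_d9
    exact Real.log_pos (by nlinarith)
  have hcon' := (le_div_iff₀ hlog).1 (not_lt.1 hcon)
  obtain ⟨σ, hσ, hσ2⟩ : ∃ σ : ℤ, (σ = 1 ∨ σ = -1) ∧ y₂ = 2 * σ := by
    rcases hy₂ with h | h
    · exact ⟨1, Or.inl rfl, by rw [h]; norm_num⟩
    · exact ⟨-1, Or.inr rfl, by rw [h]; norm_num⟩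
  obtain ⟨τ, hτ, hτ2⟩ : ∃ τ : ℤ, (τ = 1 ∨ τ = -1) ∧ z₀ = 2 * τ := by
    rcases hz₀ with h | h
    · exact ⟨1, Or.inl rfl, by rw [h]; norm_num⟩
    · exact ⟨-1, Or.inr rfl, by rw [h]; norm_num⟩
  have hP1' : P 1 = r + σ * a := by
    rw [hσ2] at hP1; linarith
  have hQ1' : Q 1 = s + τ * a := by
    rw [hτ2] at hQ1; linarith
  exact mv_main k a r c s hk'.1 hk'.2 ha2 hr hr2 hc hs hac hcb σ τ hσ hτ P Q hP0 hP1' hPrec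
    hQ0 hQ1' hQrec l m hl hm heq _ rfl hcon'
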